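/- arXiv:1111.4723 — 3 statements merged into one kernel-verified Lean document; each statement's English description precedes it below -/
import Mathlib

section
/- For all n ≥ 1 and k ≥ 0, the number of self-dual Fishburn matrices of reduced size n whose first row has sum k and whose diagonal cells have sum 0 equals the number of row-Fishburn matrices of size n whose last column has sum k; that is, |M(n,k,0)| = |RM(n,k)|. -/
open Finset

/-- Square matrices of nonnegative integers of dimension `m` (0-based indexing). -/
abbrev Mat (m : ℕ) := Matrix (Fin m) (Fin m) ℕ

/-- Upper-triangular: all entries strictly below the main diagonal vanish. -/
def UT {m : ℕ} (M : Mat m) : Prop := ∀ i j : Fin m, (j : ℕ) < (i : ℕ) → M i j = 0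

/-- The size of a matrix: the sum of all its entries. -/
def msize {m : ℕ} (M : Mat m) : ℕ := ∑ i : Fin m, ∑ j : Fin m, M i j

/-- Row `i` contains a nonzero entry. -/
def rowNonzero {m : ℕ} (M : Mat m) (i : Fin m) : Prop := ∃ j, M i j ≠ 0

/-- Column `j` contains a nonzero entry. -/
def colNonzero {m : ℕ} (M : Mat m) (j : Fin m) : Prop := ∃ i, M i j ≠ 0

/-- The dual matrix: transpose along the antidiagonal, `M̄_{i,j} = M_{m+1-j,m+1-i}`. -/
def dual {m : ℕ} (M : Mat m) : Mat m := fun i j => M j.rev i.rev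

/-- A matrix is self-dual if it equals its dual. -/
def SelfDual {m : ℕ} (M : Mat m) : Prop := M = dual M

/-- A Fishburn matrix: upper-triangular, every row and every column contains a
nonzero entry. -/
def IsFishburn {m : ℕ} (M : Mat m) : Prop :=
  UT M ∧ (∀ i, rowNonzero M i) ∧ (∀ j, colNonzero M j)

/-- The reduced size: sum of the entries in NW-cells and diagonal cells
(in 1-based terms, cells `(i,j)` with `i + j ≤ m + 1`). -/
def reducedSize {m : ℕ} (M : Mat m) : ℕ :=
  ∑ i : Fin m, ∑ j : Fin m, if (i : ℕ) + (j : ℕ) + 1 ≤ m then M i j else 0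

/-- The reduced matrix: all entries in SE-cells are replaced by zeros. -/
def reduced {m : ℕ} (M : Mat m) : Mat m :=
  fun i j => if (i : ℕ) + (j : ℕ) + 1 ≤ m then M i j else 0

/-- A super triangular matrix: upper-triangular and all SE-cells are zero. -/
def SuperTri {m : ℕ} (M : Mat m) : Prop :=
  UT M ∧ ∀ i j : Fin m, m < (i : ℕ) + (j : ℕ) + 1 → M i j = 0

/-- The sum of the first row. -/
def firstRowSum {m : ℕ} (M : Mat m) : ℕ :=
  ∑ i : Fin m, ∑ j : Fin m, if (i : ℕ) = 0 then M i j else 0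

/-- The sum of the last column. -/
def lastColSum {m : ℕ} (M : Mat m) : ℕ :=
  ∑ i : Fin m, ∑ j : Fin m, if (j : ℕ) + 1 = m then M i j else 0

/-- The sum of the diagonal cells (cells `(i,j)` with `i + j = m + 1`, 1-based). -/
def diagSum {m : ℕ} (M : Mat m) : ℕ :=
  ∑ i : Fin m, ∑ j : Fin m, if (i : ℕ) + (j : ℕ) + 1 = m then M i j else 0

/-- The sum of the center column (column `k+1` of a matrix of dimension `2k+1`). -/
def centerColSum {m : ℕ} (M : Mat m) : ℕ :=
  ∑ i : Fin m, ∑ j : Fin m, if 2 * (j : ℕ) + 1 = m then M i j else 0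

/-- Square matrices of arbitrary dimension. -/
abbrev SMat := Σ m : ℕ, Mat m

/-- `M(n)`: self-dual Fishburn matrices of reduced size `n`. -/
def Mset (n : ℕ) : Set SMat :=
  {A | IsFishburn A.2 ∧ SelfDual A.2 ∧ reducedSize A.2 = n}

/-- `M(n,k)`: matrices of `M(n)` whose first row has sum `k`. -/
def Mset₂ (n k : ℕ) : Set SMat := {A ∈ Mset n | firstRowSum A.2 = k}

/-- `M(n,k,p)`: matrices of `M(n,k)` whose diagonal cells have sum `p`. -/
def Mset₃ (n k p : ℕ) : Set SMat := {A ∈ Mset₂ n k | diagSum A.2 = p}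

/-- `EM(n,k)`: matrices of `M(n,k)` of even dimension. -/
def EMset (n k : ℕ) : Set SMat := {A ∈ Mset₂ n k | Even A.1}

/-- `OM(n,k)`: matrices of `M(n,k)` of odd dimension. -/
def OMset (n k : ℕ) : Set SMat := {A ∈ Mset₂ n k | Odd A.1}

/-- `RM(n)`: row-Fishburn matrices of size `n`. -/
def RMset (n : ℕ) : Set SMat :=
  {A | UT A.2 ∧ (∀ i, rowNonzero A.2 i) ∧ msize A.2 = n}

/-- `RM(n,k)`: row-Fishburn matrices of size `n` whose last column has sum `k`. -/
def RMset₂ (n k : ℕ) : Set SMat := {A ∈ RMset n | lastColSum A.2 = k}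

/-- `RM(n,k,p)`: matrices of `RM(n,k)` whose first row has sum `p`. -/
def RMset₃ (n k p : ℕ) : Set SMat := {A ∈ RMset₂ n k | firstRowSum A.2 = p}

/-- `SM(n)`: super triangular matrices of size `n` and dimension `2k+1` such that
(a) each of the first `k` columns contains a nonzero entry, and
(b) for `1 ≤ i ≤ k`, row `k+1-i` or column `k+1+i` contains a nonzero entry
(0-based: for `a < k`, row `a` or column `b` with `a + b = 2k` is nonzero). -/
def SMset (n : ℕ) : Set SMat :=
  {A | SuperTri A.2 ∧ msize A.2 = n ∧
    ∃ k : ℕ, A.1 = 2 * k + 1 ∧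
      (∀ j : Fin A.1, (j : ℕ) < k → colNonzero A.2 j) ∧
      (∀ a b : Fin A.1, (a : ℕ) < k → (a : ℕ) + (b : ℕ) = 2 * k →
        rowNonzero A.2 a ∨ colNonzero A.2 b)}

/-- `SM(n,k,p)`: matrices of `SM(n)` whose first row has sum `k` and whose center
column has sum `p`. -/
def SMset₃ (n k p : ℕ) : Set SMat :=
  {A ∈ SMset n | firstRowSum A.2 = k ∧ centerColSum A.2 = p}

/-- `B(n)`: upper-triangular matrices of size `n` in which every row except
possibly the first contains a nonzero entry. -/
def Bset (n : ℕ) : Set SMat :=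
  {A | UT A.2 ∧ (∀ i : Fin A.1, (i : ℕ) ≠ 0 → rowNonzero A.2 i) ∧ msize A.2 = n}

/-- `B(n,k,p)`: matrices of `B(n)` whose first row has sum `p` and whose last
column has sum `k`. -/
def Bset₃ (n k p : ℕ) : Set SMat :=
  {A ∈ Bset n | firstRowSum A.2 = p ∧ lastColSum A.2 = k}

/-!
Rows and columns are numbered from `0`. A self-dual Fishburn matrix `M` with zero antidiagonal is
determined by its part `N` strictly above the antidiagonal, and its rows and columns are all
nonzero iff for every `i` row `i` or column `m - 1 - i` of `N` is nonzero. Interleave the columns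
of `N`: those of the left half go to the even indices, those of the right half, in reverse, to the
odd ones, and row `i` goes to row `2 * i`. Then `N` becomes upper-triangular, its nonzero rows are
even, and up to the last nonzero column a zero column only occurs at an odd index, just before a
nonzero row.

Squeezing out these zero columns, together with the equally numbered zero rows, leaves an
upper-triangular matrix without zero columns, that is, the antidiagonal transpose of a row-Fishburn
matrix; entries and first row are kept. Nothing is lost: a gap has to be reinserted just before a
nonzero row precisely when that row would otherwise land on an odd index.
-/

section Filling

/-- A filling assigns a natural number to each cell `(row, column)` of the quarter-plane, with
finite support. Matrices of all dimensions are encoded as fillings; the dimension is recovered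
from the last nonzero column. -/
abbrev Filling := ℕ × ℕ →₀ ℕ

/-- The indices of the nonzero rows of a filling. -/
def nonzeroRows (f : Filling) : Set ℕ := {i | ∃ j, f (i, j) ≠ 0}

/-- The indices of the nonzero columns of a filling. -/
def nonzeroCols (f : Filling) : Set ℕ := {j | ∃ i, f (i, j) ≠ 0}

/-- The pair (sum of all entries, sum of row `0`) of a filling; pairing them makes the two
statistics of the enumeration a single additive one. -/
noncomputable def sizeFirstRow : Filling →+ ℕ × ℕ :=
  Finsupp.weight fun c => (1, if c.1 = 0 then 1 else 0)

/-- Column-Fishburn fillings: upper-triangular, with nonzero columns forming an initial segment.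
They encode the antidiagonal transposes of row-Fishburn matrices. -/
structure IsColFishburn (f : Filling) : Prop where
  row_le_col : ∀ i j, f (i, j) ≠ 0 → i ≤ j
  isLowerSet_nonzeroCols : IsLowerSet (nonzeroCols f)

/-- Folded fillings, the encoding of self-dual Fishburn matrices with zero antidiagonal: see
`foldCell` for where row `i` and column `j` of the matrix are placed. -/
structure IsFolded (g : Filling) : Prop where
  row_le_col : ∀ i j, g (i, j) ≠ 0 → i ≤ j
  even_of_mem_nonzeroRows : ∀ i ∈ nonzeroRows g, Even i
  even_mem_nonzeroCols : ∀ t ∈ nonzeroCols g, ∀ s ≤ t, Even s → s ∈ nonzeroCols g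
  mem_nonzeroCols_or_succ_mem_nonzeroRows :
    ∀ t ∈ nonzeroCols g, ∀ s < t, Odd s → s ∈ nonzeroCols g ∨ s + 1 ∈ nonzeroRows g

/-- Column-Fishburn fillings of size `n` with first row sum `k`. -/
def colFishburnFillings (n k : ℕ) : Set Filling :=
  {f | IsColFishburn f ∧ sizeFirstRow f = (n, k)}

/-- Folded fillings of size `n` with first row sum `k`. -/
def foldedFillings (n k : ℕ) : Set Filling :=
  {g | IsFolded g ∧ sizeFirstRow g = (n, k)}

variable {p : ℕ → ℕ} {f : Filling}

lemma mapDomain_prodMap_ne_zero_iff (hp : p.Injective) {x y : ℕ} :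
    f.mapDomain (Prod.map p p) (x, y) ≠ 0 ↔ ∃ i j, f (i, j) ≠ 0 ∧ p i = x ∧ p j = y := by
  rw [← Finsupp.mem_support_iff, Finsupp.mapDomain_support_of_injective (hp.prodMap hp)]
  simp

lemma nonzeroRows_mapDomain (hp : p.Injective) :
    nonzeroRows (f.mapDomain (Prod.map p p)) = p '' nonzeroRows f := by
  ext x
  simp only [nonzeroRows, Set.mem_ofPred_eq, Set.mem_image, mapDomain_prodMap_ne_zero_iff hp]
  exact ⟨fun ⟨_, i, j, h, hi, _⟩ => ⟨i, ⟨j, h⟩, hi⟩, fun ⟨i, ⟨j, h⟩, hi⟩ => ⟨p j, i, j, h, hi, rfl⟩⟩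

lemma nonzeroCols_mapDomain (hp : p.Injective) :
    nonzeroCols (f.mapDomain (Prod.map p p)) = p '' nonzeroCols f := by
  ext y
  simp only [nonzeroCols, Set.mem_ofPred_eq, Set.mem_image, mapDomain_prodMap_ne_zero_iff hp]
  exact ⟨fun ⟨_, i, j, h, _, hj⟩ => ⟨j, ⟨i, h⟩, hj⟩, fun ⟨j, ⟨i, h⟩, hj⟩ => ⟨p i, i, j, h, rfl, hj⟩⟩

lemma sizeFirstRow_mapDomain (hp : p.Injective) (hp₀ : p 0 = 0) :
    sizeFirstRow (f.mapDomain (Prod.map p p)) = sizeFirstRow f := by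
  have hzero (i : ℕ) : p i = 0 ↔ i = 0 := ⟨fun h => hp (h.trans hp₀.symm), fun h => h ▸ hp₀⟩
  simp only [sizeFirstRow, Finsupp.weight, LinearMap.toAddMonoidHom_coe,
    Finsupp.linearCombination_mapDomain]
  simp [Function.comp_def, hzero]

lemma finite_nonzeroCols (f : Filling) : (nonzeroCols f).Finite :=
  (f.support.image Prod.snd).finite_toSet.subset fun j ⟨i, hij⟩ => by
    simpa using ⟨i, hij⟩

lemma exists_isGreatest_nonzeroCols (hf : f ≠ 0) : ∃ t, IsGreatest (nonzeroCols f) t := by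
  obtain ⟨c, hc⟩ := Finsupp.ne_iff.1 hf
  exact (finite_nonzeroCols f).bddAbove.exists_isGreatest_of_nonempty ⟨c.2, c.1, hc⟩

end Filling

section Position

/-- The strictly increasing sequence from `0` that advances by one at an index outside `ρ` and to
the next even number at an index in `ρ`. Its values in a run of indices outside `ρ` alternate in
parity. -/
noncomputable def position (ρ : Set ℕ) : ℕ → ℕ
  | 0 => 0
  | s + 1 =>
    open Classical in if s + 1 ∈ ρ then 2 * (position ρ s / 2 + 1) else position ρ s + 1

variable {ρ : Set ℕ} {s : ℕ}

lemma position_succ_of_mem (h : s + 1 ∈ ρ) :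
    position ρ (s + 1) = 2 * (position ρ s / 2 + 1) := if_pos h

lemma position_succ_of_notMem (h : s + 1 ∉ ρ) : position ρ (s + 1) = position ρ s + 1 := if_neg h

lemma strictMono_position (ρ : Set ℕ) : StrictMono (position ρ) := by
  refine strictMono_nat_of_lt_succ fun s => ?_
  by_cases h : s + 1 ∈ ρ
  · rw [position_succ_of_mem h]; lia
  · rw [position_succ_of_notMem h]; lia

lemma even_position (h : s ∈ ρ) : Even (position ρ s) := by
  cases s with
  | zero => exact Even.zero
  | succ s => rw [position_succ_of_mem h]; exact even_two_mul _

lemma mem_range_position_or (ρ : Set ℕ) (t : ℕ) :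
    t ∈ Set.range (position ρ) ∨ ∃ s ∈ ρ, position ρ s = t + 1 := by
  induction t with
  | zero => exact .inl ⟨0, rfl⟩
  | succ t ih =>
    rcases ih with ⟨s, rfl⟩ | ⟨s, -, hst⟩
    · by_cases h : s + 1 ∈ ρ
      · have hs := position_succ_of_mem h
        rcases Nat.even_or_odd (position ρ s) with heven | hodd
        · exact .inr ⟨s + 1, h, by grind⟩
        · exact .inl ⟨s + 1, by grind⟩
      · exact .inl ⟨s + 1, position_succ_of_notMem h⟩
    · exact .inl ⟨s, hst⟩

lemma mem_range_position_of_even {t : ℕ} (ht : Even t) : t ∈ Set.range (position ρ) := by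
  refine (mem_range_position_or ρ t).resolve_right ?_
  rintro ⟨s, hs, hst⟩
  have := even_position hs
  grind

lemma eq_position {q : ℕ → ℕ} (hq : StrictMono q) (hq₀ : q 0 = 0)
    (heven_range : ∀ t, Even t → t ∈ Set.range q) (heven : ∀ s ∈ ρ, Even (q s))
    (hsucc : ∀ s, s + 1 ∉ ρ → q (s + 1) = q s + 1) : q = position ρ := by
  funext s
  induction s with
  | zero => exact hq₀
  | succ s ih =>
    by_cases h : s + 1 ∈ ρ
    · obtain ⟨u, hu⟩ := heven_range _ (even_two_mul (q s / 2 + 1))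
      have hle : q (s + 1) ≤ q u := hq.monotone (hq.lt_iff_lt.1 (by lia : q s < q u))
      have hlt : q s < q (s + 1) := hq s.lt_succ_self
      have hqe := heven _ h
      rw [position_succ_of_mem h, ← ih]
      grind
    · rw [position_succ_of_notMem h, hsucc s h, ih]

end Position

section Spread

variable {f g : Filling}

/-- Moves the rows and columns of a column-Fishburn filling apart so that its nonzero rows land on
even indices. -/
noncomputable def spread (f : Filling) : Filling :=
  f.mapDomain (Prod.map (position (nonzeroRows f)) (position (nonzeroRows f)))

/-- The indices that `spread` uses, read off from its value: those of the nonzero columns and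
those beyond every nonzero column. -/
def usedIndices (g : Filling) : Set ℕ :=
  {t | t ∈ nonzeroCols g ∨ ∀ u ∈ nonzeroCols g, u < t}

lemma IsColFishburn.range_position (hf : IsColFishburn f) :
    Set.range (position (nonzeroRows f)) = usedIndices (spread f) := by
  have hmono := strictMono_position (nonzeroRows f)
  ext t
  rw [usedIndices, spread, nonzeroCols_mapDomain hmono.injective, Set.mem_ofPred_eq,
    Set.forall_mem_image]
  constructor
  · rintro ⟨s, rfl⟩
    by_cases hs : s ∈ nonzeroCols f
    · exact .inl ⟨s, hs, rfl⟩
    · exact .inr fun j hj => hmono <| lt_of_not_ge fun h => hs (hf.isLowerSet_nonzeroCols h hj)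
  · rintro (⟨s, -, rfl⟩ | ht)
    · exact ⟨s, rfl⟩
    · refine (mem_range_position_or _ t).resolve_right ?_
      rintro ⟨s, ⟨j, hsj⟩, hst⟩
      have hle := hmono.monotone (hf.row_le_col s j hsj)
      have hlt := ht ⟨s, hsj⟩
      lia

lemma IsColFishburn.isFolded_spread (hf : IsColFishburn f) : IsFolded (spread f) := by
  have hmono := strictMono_position (nonzeroRows f)
  have hrows := nonzeroRows_mapDomain (f := f) hmono.injective
  have hcols := nonzeroCols_mapDomain (f := f) hmono.injective
  refine ⟨fun x y hxy => ?_, ?_, ?_, ?_⟩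
  · obtain ⟨i, j, hij, rfl, rfl⟩ := (mapDomain_prodMap_ne_zero_iff hmono.injective).1 hxy
    exact hmono.monotone (hf.row_le_col i j hij)
  · rw [spread, hrows, Set.forall_mem_image]
    exact fun i hi => even_position hi
  · rw [spread, hcols, Set.forall_mem_image]
    intro j hj s hs heven
    obtain ⟨i, rfl⟩ := mem_range_position_of_even (ρ := nonzeroRows f) heven
    exact ⟨i, hf.isLowerSet_nonzeroCols (hmono.le_iff_le.1 hs) hj, rfl⟩
  · rw [spread, hcols, hrows, Set.forall_mem_image]
    intro j hj s hs hodd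
    rcases mem_range_position_or (nonzeroRows f) s with ⟨i, rfl⟩ | ⟨i, hi, his⟩
    · exact .inl ⟨i, hf.isLowerSet_nonzeroCols (hmono.lt_iff_lt.1 hs).le hj, rfl⟩
    · exact .inr ⟨i, hi, his⟩

lemma injOn_spread : {f | IsColFishburn f}.InjOn spread := by
  intro f hf f' hf' h
  have hpos : position (nonzeroRows f) = position (nonzeroRows f') := by
    rw [← (strictMono_position _).range_inj (strictMono_position _), hf.range_position,
      hf'.range_position, h]
  have hinj := (strictMono_position (nonzeroRows f')).injective
  rw [spread, spread, hpos] at h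
  exact Finsupp.mapDomain_injective (hinj.prodMap hinj) h

lemma IsFolded.mem_usedIndices_of_even (hg : IsFolded g) {t : ℕ} (ht : Even t) :
    t ∈ usedIndices g := by
  by_contra! h
  simp only [usedIndices, Set.mem_ofPred_eq, not_or] at h
  push Not at h
  obtain ⟨hnot, u, hu, htu⟩ := h
  exact hnot (hg.even_mem_nonzeroCols u hu t htu ht)

lemma IsFolded.mem_usedIndices_or_succ_mem_nonzeroRows (hg : IsFolded g) (t : ℕ) :
    t ∈ usedIndices g ∨ t + 1 ∈ nonzeroRows g := by
  refine or_iff_not_imp_left.2 fun ht => ?_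
  have hodd : Odd t := Nat.not_even_iff_odd.1 fun heven => ht (hg.mem_usedIndices_of_even heven)
  simp only [usedIndices, Set.mem_ofPred_eq, not_or, not_forall, not_lt] at ht
  obtain ⟨hcol, u, hu, htu⟩ := ht
  have hlt : t < u := htu.lt_of_ne fun h => hcol (h ▸ hu)
  exact (hg.mem_nonzeroCols_or_succ_mem_nonzeroRows u hu t hlt hodd).resolve_left hcol

lemma IsFolded.infinite_usedIndices (hg : IsFolded g) : (usedIndices g).Infinite :=
  Set.infinite_of_injective_forall_mem (mul_right_injective₀ two_ne_zero)
    fun _ : ℕ => hg.mem_usedIndices_of_even (even_two_mul _)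

lemma IsFolded.exists_mapDomain_eq (hg : IsFolded g) {q : ℕ → ℕ} (hq : StrictMono q)
    (hrange : Set.range q = usedIndices g) :
    ∃ f, IsColFishburn f ∧ f.mapDomain (Prod.map q q) = g := by
  have hinj := hq.injective.prodMap hq.injective
  have hsupp : ↑g.support ⊆ Set.range (Prod.map q q) := by
    rintro ⟨x, y⟩ hxy
    replace hxy : g (x, y) ≠ 0 := Finsupp.mem_support_iff.1 hxy
    rw [Set.range_prodMap, hrange]
    exact ⟨hg.mem_usedIndices_of_even (hg.even_of_mem_nonzeroRows x ⟨y, hxy⟩), .inl ⟨x, hxy⟩⟩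
  have hmap := Finsupp.mapDomain_comapDomain _ hinj g hsupp
  set f := g.comapDomain (Prod.map q q) hinj.injOn
  have hcols := nonzeroCols_mapDomain (f := f) hq.injective
  rw [hmap] at hcols
  refine ⟨f, ⟨fun i j hij => hq.le_iff_le.1 (hg.row_le_col _ _ hij), fun b a hab hb => ?_⟩, hmap⟩
  have hqb : q b ∈ nonzeroCols g := hcols ▸ Set.mem_image_of_mem q hb
  have hqa : q a ∈ usedIndices g := hrange ▸ Set.mem_range_self a
  have hqa' := hqa.resolve_right fun h => (h _ hqb).not_ge (hq.monotone hab)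
  rwa [hcols, hq.injective.mem_set_image] at hqa'

lemma surjOn_spread : {f | IsColFishburn f}.SurjOn spread {g | IsFolded g} := by
  intro g hg
  replace hg : IsFolded g := hg
  obtain ⟨q, hq, hrange⟩ : ∃ q, StrictMono q ∧ Set.range q = usedIndices g :=
    ⟨Nat.nth (· ∈ usedIndices g), Nat.nth_strictMono hg.infinite_usedIndices,
      Nat.range_nth_of_infinite hg.infinite_usedIndices⟩
  obtain ⟨f, hf, hfg⟩ := hg.exists_mapDomain_eq hq hrange
  have hrows : nonzeroRows g = q '' nonzeroRows f := hfg ▸ nonzeroRows_mapDomain hq.injective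
  have heven (t : ℕ) (ht : Even t) : t ∈ Set.range q := hrange ▸ hg.mem_usedIndices_of_even ht
  have hq₀ : q 0 = 0 := by
    obtain ⟨s, hs⟩ := heven 0 Even.zero
    exact Nat.eq_zero_of_le_zero ((hq.monotone s.zero_le).trans_eq hs)
  have hsucc (s : ℕ) (hs : s + 1 ∉ nonzeroRows f) : q (s + 1) = q s + 1 := by
    have hlt : q s < q (s + 1) := hq s.lt_succ_self
    have hpred := hg.mem_usedIndices_or_succ_mem_nonzeroRows (q (s + 1) - 1)
    rw [Nat.sub_add_cancel (by lia), hrows, hq.injective.mem_set_image, or_iff_left hs,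
      ← hrange] at hpred
    obtain ⟨u, hu⟩ := hpred
    have hus : u < s + 1 := hq.lt_iff_lt.1 (by lia)
    have hle : q u ≤ q s := hq.monotone (Nat.le_of_lt_succ hus)
    lia
  have hqpos : q = position (nonzeroRows f) := eq_position hq hq₀ heven
    (fun s hs => hg.even_of_mem_nonzeroRows _ (hrows ▸ Set.mem_image_of_mem q hs)) hsucc
  exact ⟨f, hf, by rw [spread, ← hqpos, hfg]⟩

lemma sizeFirstRow_spread (f : Filling) : sizeFirstRow (spread f) = sizeFirstRow f :=
  sizeFirstRow_mapDomain (strictMono_position _).injective rfl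

lemma bijOn_spread (n k : ℕ) :
    (colFishburnFillings n k).BijOn spread (foldedFillings n k) := by
  refine ⟨fun f hf => ⟨hf.1.isFolded_spread, (sizeFirstRow_spread f).trans hf.2⟩,
    injOn_spread.mono fun f hf => hf.1, fun g hg => ?_⟩
  obtain ⟨f, hf, rfl⟩ := surjOn_spread hg.1
  exact ⟨f, ⟨hf, (sizeFirstRow_spread f).symm.trans hg.2⟩, rfl⟩

end Spread

section Relabel

variable {m : ℕ} {φ : Fin m × Fin m → ℕ × ℕ} {A : Mat m}

/-- A matrix as a finitely supported function on cells. -/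
noncomputable def entries (A : Mat m) : Fin m × Fin m →₀ ℕ :=
  Finsupp.equivFunOnFinite.symm fun c => A c.1 c.2

/-- The filling obtained from a matrix by moving the entry of each cell `c` to the cell `φ c`;
entries moved to the same cell are added. -/
noncomputable def relabel (φ : Fin m × Fin m → ℕ × ℕ) (A : Mat m) : Filling :=
  (entries A).mapDomain φ

/-- The support of a matrix, as a set of cells. -/
def nonzeroCells (A : Mat m) : Set (Fin m × Fin m) := {c | A c.1 c.2 ≠ 0}

lemma coe_support_entries (A : Mat m) : ↑(entries A).support = nonzeroCells A := by
  ext c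
  simp [entries, nonzeroCells]

lemma relabel_ne_zero_iff (hφ : (nonzeroCells A).InjOn φ) {c : ℕ × ℕ} :
    relabel φ A c ≠ 0 ↔ ∃ i j, A i j ≠ 0 ∧ φ (i, j) = c := by
  rw [← coe_support_entries] at hφ
  rw [← Finsupp.mem_support_iff, relabel, Finsupp.mapDomain_support_of_injOn _ hφ]
  simp [entries]

lemma relabel_apply (hφ : (nonzeroCells A).InjOn φ) {i j : Fin m} (hij : A i j ≠ 0) :
    relabel φ A (φ (i, j)) = A i j :=
  Finsupp.mapDomain_apply' _ _ (coe_support_entries A).subset hφ (a := (i, j)) hij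

lemma relabel_eq {g : Filling} (hφ : (nonzeroCells A).InjOn φ)
    (hval : ∀ i j, A i j ≠ 0 → A i j = g (φ (i, j)))
    (hcover : ∀ c, g c ≠ 0 → ∃ i j, A i j ≠ 0 ∧ φ (i, j) = c) : relabel φ A = g := by
  ext c
  by_cases hc : relabel φ A c = 0
  · rw [hc]
    by_contra hgc
    exact (relabel_ne_zero_iff hφ).2 (hcover c (Ne.symm hgc)) hc
  · obtain ⟨i, j, hij, rfl⟩ := (relabel_ne_zero_iff hφ).1 hc
    rw [relabel_apply hφ hij, hval i j hij]

lemma injOn_relabel {S : Set (Fin m × Fin m)} (hφ : S.InjOn φ) :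
    {A | nonzeroCells A ⊆ S}.InjOn (relabel φ) := by
  intro A hA B hB h
  have hcells := Finsupp.mapDomain_injOn S hφ ((coe_support_entries A).trans_subset hA)
    ((coe_support_entries B).trans_subset hB) h
  ext i j
  exact DFunLike.congr_fun hcells (i, j)

lemma sizeFirstRow_relabel (φ : Fin m × Fin m → ℕ × ℕ) (A : Mat m) :
    sizeFirstRow (relabel φ A) =
      (msize A, ∑ i, ∑ j, if (φ (i, j)).1 = 0 then A i j else 0) := by
  rw [sizeFirstRow, Finsupp.weight, LinearMap.toAddMonoidHom_coe, relabel,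
    Finsupp.linearCombination_mapDomain, Finsupp.linearCombination_apply,
    Finsupp.sum_fintype _ _ (by simp), Fintype.sum_prod_type]
  ext <;> simp [Prod.fst_sum, Prod.snd_sum, msize, entries]

end Relabel

section RowFishburn

variable {m : ℕ} {A : Mat m}

/-- The image of a cell under reflection in the antidiagonal. -/
def reflectCell (c : Fin m × Fin m) : ℕ × ℕ := (c.2.rev, c.1.rev)

/-- The filling of the antidiagonal transpose of a matrix. -/
noncomputable def transposeFilling (A : Mat m) : Filling := relabel reflectCell A

lemma injective_reflectCell : (reflectCell (m := m)).Injective := by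
  rintro ⟨i, j⟩ ⟨i', j'⟩ h
  rw [reflectCell, reflectCell, Prod.mk.injEq, Fin.val_inj, Fin.val_inj, Fin.rev_inj,
    Fin.rev_inj] at h
  exact Prod.ext h.2 h.1

lemma transposeFilling_ne_zero_iff {x y : ℕ} :
    transposeFilling A (x, y) ≠ 0 ↔ ∃ i j, A i j ≠ 0 ∧ (j.rev : ℕ) = x ∧ (i.rev : ℕ) = y := by
  simp only [transposeFilling, relabel_ne_zero_iff injective_reflectCell.injOn, reflectCell,
    Prod.mk.injEq]

lemma nonzeroCols_transposeFilling (hA : ∀ i, rowNonzero A i) :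
    nonzeroCols (transposeFilling A) = Set.Iio m := by
  ext t
  simp only [nonzeroCols, transposeFilling_ne_zero_iff, Set.mem_ofPred_eq, Set.mem_Iio]
  constructor
  · rintro ⟨_, i, _, _, _, rfl⟩
    exact i.rev.isLt
  · intro ht
    obtain ⟨j, hj⟩ := hA (Fin.rev ⟨t, ht⟩)
    exact ⟨j.rev, _, j, hj, rfl, by rw [Fin.rev_rev]⟩

lemma isColFishburn_transposeFilling (hUT : UT A) (hA : ∀ i, rowNonzero A i) :
    IsColFishburn (transposeFilling A) := by
  refine ⟨fun x y hxy => ?_, nonzeroCols_transposeFilling hA ▸ isLowerSet_Iio m⟩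
  obtain ⟨i, j, hij, rfl, rfl⟩ := transposeFilling_ne_zero_iff.1 hxy
  exact Fin.rev_le_rev.2 (not_lt.1 fun h => hij (hUT i j h))

lemma sizeFirstRow_transposeFilling (A : Mat m) :
    sizeFirstRow (transposeFilling A) = (msize A, lastColSum A) := by
  have hlast (j : Fin m) : (j.rev : ℕ) = 0 ↔ (j : ℕ) + 1 = m := by rw [Fin.val_rev]; lia
  simp only [transposeFilling, sizeFirstRow_relabel, reflectCell, hlast, lastColSum]

lemma IsColFishburn.exists_transposeFilling_eq {f : Filling} (hf : IsColFishburn f) :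
    ∃ (m : ℕ) (A : Mat m), (UT A ∧ ∀ i, rowNonzero A i) ∧ transposeFilling A = f := by
  obtain ⟨m, hm⟩ : ∃ m, nonzeroCols f = Set.Iio m :=
    hf.isLowerSet_nonzeroCols.eq_univ_or_Iio.resolve_left fun h =>
      Set.infinite_univ (h ▸ finite_nonzeroCols f)
  let A : Mat m := fun i j => f (j.rev, i.rev)
  have hcover (x y : ℕ) (hxy : f (x, y) ≠ 0) :
      ∃ i j : Fin m, A i j ≠ 0 ∧ (j.rev : ℕ) = x ∧ (i.rev : ℕ) = y := by
    have hy : y < m := hm.subset ⟨x, hxy⟩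
    have hx : x < m := (hf.row_le_col x y hxy).trans_lt hy
    refine ⟨Fin.rev ⟨y, hy⟩, Fin.rev ⟨x, hx⟩, ?_⟩
    simpa only [A, Fin.rev_rev, and_true] using hxy
  refine ⟨m, A, ⟨fun i j hji => ?_, fun i => ?_⟩, ?_⟩
  · by_contra hij
    exact (Fin.rev_lt_rev.2 hji).not_ge (hf.row_le_col _ _ hij)
  · obtain ⟨x, hx⟩ := hm.superset i.rev.isLt
    obtain ⟨i', j, hij, rfl, hi⟩ := hcover _ _ hx
    rw [Fin.val_inj, Fin.rev_inj] at hi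
    exact ⟨j, hi ▸ hij⟩
  · refine relabel_eq injective_reflectCell.injOn (fun i j _ => rfl) fun c hc => ?_
    simpa only [Prod.ext_iff, reflectCell] using hcover c.1 c.2 hc

lemma bijOn_transposeFilling (n k : ℕ) :
    (RMset₂ n k).BijOn (fun A => transposeFilling A.2) (colFishburnFillings n k) := by
  refine ⟨?_, ?_, ?_⟩
  · rintro ⟨m, A⟩ ⟨⟨hUT, hA, hsize⟩, hlast⟩
    refine ⟨isColFishburn_transposeFilling hUT hA, ?_⟩
    rw [sizeFirstRow_transposeFilling, hsize, hlast]
  · rintro ⟨m, A⟩ ⟨⟨-, hA, -⟩, -⟩ ⟨m', A'⟩ ⟨⟨-, hA', -⟩, -⟩ h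
    replace h : transposeFilling A = transposeFilling A' := h
    obtain rfl : m = m' := Set.Iio_injective <|
      (nonzeroCols_transposeFilling hA).symm.trans (h ▸ nonzeroCols_transposeFilling hA')
    exact congrArg _ <| injOn_relabel (injective_reflectCell.injOn (s := Set.univ))
      (Set.subset_univ _) (Set.subset_univ _) h
  · rintro f ⟨hf, hsize⟩
    obtain ⟨m, A, hA, rfl⟩ := hf.exists_transposeFilling_eq
    rw [sizeFirstRow_transposeFilling, Prod.mk.injEq] at hsize
    exact ⟨⟨m, A⟩, ⟨⟨hA.1, hA.2, hsize.1⟩, hsize.2⟩, rfl⟩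

end RowFishburn

section Halving

variable {m : ℕ} {M N : Mat m}

/-- The matrix of the entries strictly above the antidiagonal. -/
def strictNW (M : Mat m) : Mat m := fun i j => if (i : ℕ) + j + 1 < m then M i j else 0

/-- The half-matrices of Fishburn type: `N` satisfies this iff `N + dual N` is a Fishburn matrix and
`N` is its part strictly above the antidiagonal. -/
structure IsHalf (N : Mat m) : Prop where
  le_and_lt : ∀ i j, N i j ≠ 0 → (i : ℕ) ≤ j ∧ (i : ℕ) + j + 1 < m
  rowNonzero_or : ∀ i, rowNonzero N i ∨ colNonzero N i.rev

/-- Half-matrices of Fishburn type of size `n` with first row sum `k`. -/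
def halfMatrices (n k : ℕ) : Set SMat :=
  {A | IsHalf A.2 ∧ msize A.2 = n ∧ firstRowSum A.2 = k}

lemma diagSum_eq_zero_iff :
    diagSum M = 0 ↔ ∀ i j : Fin m, (i : ℕ) + j + 1 = m → M i j = 0 := by
  simp [diagSum]

lemma selfDual_add_dual (N : Mat m) : SelfDual (N + dual N) := by
  ext i j
  simp only [dual, Matrix.add_apply, Fin.rev_rev, add_comm]

lemma SelfDual.strictNW_add_dual_strictNW (hM : SelfDual M) (hdiag : diagSum M = 0) :
    strictNW M + dual (strictNW M) = M := by
  ext i j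
  have hsymm : M j.rev i.rev = M i j := (congrFun₂ hM i j).symm
  have hij := diagSum_eq_zero_iff.1 hdiag i j
  simp only [Matrix.add_apply, dual, strictNW, Fin.val_rev, hsymm]
  grind

lemma rowNonzero_add_dual_iff {i : Fin m} :
    rowNonzero (N + dual N) i ↔ rowNonzero N i ∨ colNonzero N i.rev := by
  simp only [rowNonzero, colNonzero, dual, Matrix.add_apply, ne_eq, add_eq_zero, not_and_or,
    exists_or, Fin.rev_surjective.exists (p := fun j => N j i.rev ≠ 0)]

lemma SelfDual.colNonzero_iff (hM : SelfDual M) {j : Fin m} :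
    colNonzero M j ↔ rowNonzero M j.rev := by
  simp only [colNonzero, rowNonzero, Fin.rev_surjective.exists (p := fun k => M j.rev k ≠ 0)]
  refine exists_congr fun i => ?_
  rw [congrFun₂ hM i j, dual]

lemma IsHalf.eq_zero_of_not_lt (hN : IsHalf N) {i j : Fin m} (h : ¬(i : ℕ) + j + 1 < m) :
    N i j = 0 :=
  not_not.1 fun hij => h (hN.le_and_lt i j hij).2

lemma isHalf_strictNW (hM : IsFishburn M) (hdual : SelfDual M) (hdiag : diagSum M = 0) :
    IsHalf (strictNW M) := by
  refine ⟨fun i j hij => ?_, fun i => ?_⟩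
  · obtain ⟨hlt, hij⟩ := ite_ne_right_iff.1 hij
    exact ⟨not_lt.1 fun h => hij (hM.1 i j h), hlt⟩
  · rw [← rowNonzero_add_dual_iff, hdual.strictNW_add_dual_strictNW hdiag]
    exact hM.2.1 i

lemma IsHalf.isFishburn_add_dual (hN : IsHalf N) : IsFishburn (N + dual N) := by
  have hrows (i : Fin m) : rowNonzero (N + dual N) i :=
    rowNonzero_add_dual_iff.2 (hN.rowNonzero_or i)
  refine ⟨fun i j hji => ?_, hrows, fun j => (selfDual_add_dual N).colNonzero_iff.2 (hrows _)⟩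
  by_contra hij
  rcases not_and_or.1 (mt add_eq_zero.2 hij) with h | h
  · exact hji.not_ge (hN.le_and_lt i j h).1
  · exact (Fin.rev_lt_rev.2 hji).not_ge (hN.le_and_lt _ _ h).1

lemma IsHalf.diagSum_add_dual (hN : IsHalf N) : diagSum (N + dual N) = 0 :=
  diagSum_eq_zero_iff.2 fun i j hij => by
    rw [Matrix.add_apply, dual, hN.eq_zero_of_not_lt (by lia),
      hN.eq_zero_of_not_lt (by simp only [Fin.val_rev]; lia)]

lemma IsHalf.strictNW_add_dual (hN : IsHalf N) : strictNW (N + dual N) = N := by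
  ext i j
  by_cases h : (i : ℕ) + j + 1 < m
  · rw [strictNW, if_pos h, Matrix.add_apply, dual,
      hN.eq_zero_of_not_lt (i := j.rev) (by simp only [Fin.val_rev]; lia), add_zero]
  · rw [strictNW, if_neg h, hN.eq_zero_of_not_lt h]

lemma msize_strictNW (hdiag : diagSum M = 0) : msize (strictNW M) = reducedSize M := by
  refine Finset.sum_congr rfl fun i _ => Finset.sum_congr rfl fun j _ => ?_
  have hij := diagSum_eq_zero_iff.1 hdiag i j
  grind [strictNW]

lemma firstRowSum_strictNW (hdiag : diagSum M = 0) :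
    firstRowSum (strictNW M) = firstRowSum M := by
  refine Finset.sum_congr rfl fun i _ => Finset.sum_congr rfl fun j _ => ?_
  have hij := diagSum_eq_zero_iff.1 hdiag i j
  grind [strictNW]

lemma bijOn_strictNW (n k : ℕ) :
    (Mset₃ n k 0).BijOn (Sigma.map id fun _ => strictNW) (halfMatrices n k) := by
  refine Set.InvOn.bijOn (f' := Sigma.map id fun _ N => N + dual N) ⟨?_, ?_⟩ ?_ ?_
  · rintro ⟨m, M⟩ ⟨⟨⟨-, hdual, -⟩, -⟩, hdiag⟩
    exact congrArg (Sigma.mk m) (hdual.strictNW_add_dual_strictNW hdiag)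
  · rintro ⟨m, N⟩ ⟨hN, -, -⟩
    exact congrArg (Sigma.mk m) hN.strictNW_add_dual
  · rintro ⟨m, M⟩ ⟨⟨⟨hM, hdual, hsize⟩, hfirst⟩, hdiag⟩
    exact ⟨isHalf_strictNW hM hdual hdiag, (msize_strictNW hdiag).trans hsize,
      (firstRowSum_strictNW hdiag).trans hfirst⟩
  · rintro ⟨m, N⟩ ⟨hN, hsize, hfirst⟩
    have hdiag := hN.diagSum_add_dual
    refine ⟨⟨⟨hN.isFishburn_add_dual, selfDual_add_dual N, ?_⟩, ?_⟩, hdiag⟩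
    · exact (msize_strictNW hdiag).symm.trans (hN.strictNW_add_dual.symm ▸ hsize)
    · exact (firstRowSum_strictNW hdiag).symm.trans (hN.strictNW_add_dual.symm ▸ hfirst)

end Halving

section Fold

variable {m t : ℕ} {N : Mat m} {g : Filling}

/-- The index at which column `j` of an `m × m` half-matrix is placed: columns in the left half go
to even indices from left to right, the others to odd indices from right to left. The value at the
zero column `j = m - 1` is junk. -/
def foldCol (m j : ℕ) : ℕ := if 2 * j + 1 < m then 2 * j else 2 * (m - 1 - j) - 1

/-- The cell at which a cell of a half-matrix is placed. If `1 ≤ i ≤ (m - 1) / 2`, row `i` and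
column `m - 1 - i`, of which at least one is nonzero, go to the neighboring indices `2 * i` and
`2 * i - 1`. -/
def foldCell (c : Fin m × Fin m) : ℕ × ℕ := (2 * c.1, foldCol m c.2)

/-- The folded filling of a half-matrix. -/
noncomputable def foldHalf (N : Mat m) : Filling := relabel foldCell N

lemma foldCol_add_two_le {j : ℕ} (hj : j + 1 < m) : foldCol m j + 2 ≤ m := by
  grind [foldCol]

lemma two_mul_le_foldCol_iff {i j : ℕ} (hj : j + 1 < m) :
    2 * i ≤ foldCol m j ↔ i ≤ j ∧ i + j + 1 < m := by
  grind [foldCol]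

lemma foldCol_inj {j j' : ℕ} (hj : j + 1 < m) (hj' : j' + 1 < m) :
    foldCol m j = foldCol m j' ↔ j = j' := by
  grind [foldCol]

lemma exists_foldCol_eq (ht : t + 2 ≤ m) :
    ∃ j : Fin m, (j : ℕ) + 1 < m ∧ foldCol m j = t := by
  rcases Nat.even_or_odd' t with ⟨a, rfl | rfl⟩
  · exact ⟨⟨a, by lia⟩, by grind [foldCol]⟩
  · exact ⟨⟨m - 2 - a, by lia⟩, by grind [foldCol]⟩

lemma injOn_foldCell : {c : Fin m × Fin m | (c.2 : ℕ) + 1 < m}.InjOn foldCell := by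
  rintro ⟨i, j⟩ hj ⟨i', j'⟩ hj' h
  obtain ⟨hrow, hcol⟩ := Prod.mk.inj h
  exact Prod.ext (Fin.ext (Nat.eq_of_mul_eq_mul_left two_pos hrow))
    (Fin.ext ((foldCol_inj hj hj').1 hcol))

lemma foldHalf_ne_zero_iff (hN : ∀ i j, N i j ≠ 0 → (j : ℕ) + 1 < m) {x y : ℕ} :
    foldHalf N (x, y) ≠ 0 ↔ ∃ i j : Fin m, N i j ≠ 0 ∧ 2 * (i : ℕ) = x ∧ foldCol m j = y := by
  simp only [foldHalf, relabel_ne_zero_iff (injOn_foldCell.mono fun c => hN c.1 c.2), foldCell,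
    Prod.mk.injEq]

lemma mem_nonzeroRows_foldHalf_iff (hN : ∀ i j, N i j ≠ 0 → (j : ℕ) + 1 < m) {i : Fin m} :
    2 * (i : ℕ) ∈ nonzeroRows (foldHalf N) ↔ rowNonzero N i := by
  simp only [nonzeroRows, Set.mem_ofPred_eq, foldHalf_ne_zero_iff hN]
  constructor
  · rintro ⟨_, i', j, hij, hi, -⟩
    obtain rfl : i' = i := Fin.ext (by lia)
    exact ⟨j, hij⟩
  · rintro ⟨j, hij⟩
    exact ⟨_, i, j, hij, rfl, rfl⟩

lemma mem_nonzeroCols_foldHalf_iff (hN : ∀ i j, N i j ≠ 0 → (j : ℕ) + 1 < m) {j : Fin m}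
    (hj : (j : ℕ) + 1 < m) : foldCol m j ∈ nonzeroCols (foldHalf N) ↔ colNonzero N j := by
  simp only [nonzeroCols, Set.mem_ofPred_eq, foldHalf_ne_zero_iff hN]
  constructor
  · rintro ⟨_, i, j', hij, -, hj'⟩
    obtain rfl : j' = j := Fin.ext ((foldCol_inj (hN i j' hij) hj).1 hj')
    exact ⟨i, hij⟩
  · rintro ⟨i, hij⟩
    exact ⟨_, i, j, hij, rfl, rfl⟩

lemma sizeFirstRow_foldHalf (N : Mat m) : sizeFirstRow (foldHalf N) = (msize N, firstRowSum N) := by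
  simp [foldHalf, sizeFirstRow_relabel, foldCell, firstRowSum]

lemma IsHalf.succ_lt (hN : IsHalf N) (i j : Fin m) (hij : N i j ≠ 0) : (j : ℕ) + 1 < m := by
  have := (hN.le_and_lt i j hij).2
  lia

lemma IsHalf.add_two_le (hN : IsHalf N) (ht : t ∈ nonzeroCols (foldHalf N)) : t + 2 ≤ m := by
  obtain ⟨x, hx⟩ := ht
  obtain ⟨i, j, hij, rfl, rfl⟩ := (foldHalf_ne_zero_iff hN.succ_lt).1 hx
  exact foldCol_add_two_le (hN.succ_lt i j hij)

lemma IsHalf.colNonzero_rev (hN : IsHalf N) {i : Fin m} (hi : m ≤ 2 * (i : ℕ) + 1) :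
    colNonzero N i.rev := by
  refine (hN.rowNonzero_or i).resolve_left ?_
  rintro ⟨j, hij⟩
  have := hN.le_and_lt i j hij
  lia

lemma IsHalf.sub_two_mem_nonzeroCols (hN : IsHalf N) (hm : 2 ≤ m) :
    m - 2 ∈ nonzeroCols (foldHalf N) := by
  have hcol := hN.colNonzero_rev (i := ⟨m / 2, by lia⟩) (by grind)
  rw [← mem_nonzeroCols_foldHalf_iff hN.succ_lt (by grind)] at hcol
  convert hcol using 1
  grind [foldCol]

lemma IsHalf.dim_eq (hN : IsHalf N) (ht : IsGreatest (nonzeroCols (foldHalf N)) t) :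
    m = t + 2 := by
  have hle := hN.add_two_le ht.1
  have hge := ht.2 (hN.sub_two_mem_nonzeroCols (by lia))
  lia

lemma IsHalf.isFolded_foldHalf (hN : IsHalf N) : IsFolded (foldHalf N) := by
  have hsupp := hN.succ_lt
  refine ⟨fun x y hxy => ?_, ?_, fun t ht s hst heven => ?_, fun t ht s hst hodd => ?_⟩
  · obtain ⟨i, j, hij, rfl, rfl⟩ := (foldHalf_ne_zero_iff hsupp).1 hxy
    exact (two_mul_le_foldCol_iff (hsupp i j hij)).2 (hN.le_and_lt i j hij)
  · rintro x ⟨y, hxy⟩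
    obtain ⟨i, j, -, rfl, -⟩ := (foldHalf_ne_zero_iff hsupp).1 hxy
    exact even_two_mul _
  · have hm := hN.add_two_le ht
    obtain ⟨a, rfl⟩ := heven.two_dvd
    have hcol := hN.colNonzero_rev (i := Fin.rev ⟨a, by lia⟩) (by grind)
    rw [Fin.rev_rev, ← mem_nonzeroCols_foldHalf_iff hsupp (by grind)] at hcol
    convert hcol using 1
    grind [foldCol]
  · have hm := hN.add_two_le ht
    obtain ⟨a, rfl⟩ := hodd
    rcases hN.rowNonzero_or ⟨a + 1, by lia⟩ with hrow | hcol
    · exact .inr ((mem_nonzeroRows_foldHalf_iff hsupp).2 hrow)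
    · rw [← mem_nonzeroCols_foldHalf_iff hsupp (by grind)] at hcol
      refine .inl ?_
      convert hcol using 1
      grind [foldCol]

/-- The half-matrix of dimension `m` whose folded filling is the given one. -/
def unfoldHalf (m : ℕ) (g : Filling) : Mat m :=
  fun i j => if (j : ℕ) + 1 < m then g (foldCell (i, j)) else 0

lemma succ_lt_of_unfoldHalf_ne_zero (i j : Fin m) (hij : unfoldHalf m g i j ≠ 0) :
    (j : ℕ) + 1 < m :=
  (ite_ne_right_iff.1 hij).1

lemma IsFolded.foldHalf_unfoldHalf (hg : IsFolded g) (ht : t ∈ upperBounds (nonzeroCols g)) :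
    foldHalf (unfoldHalf (t + 2) g) = g := by
  refine relabel_eq (injOn_foldCell.mono fun c => succ_lt_of_unfoldHalf_ne_zero c.1 c.2)
    (fun i j hij => if_pos (succ_lt_of_unfoldHalf_ne_zero i j hij)) ?_
  rintro ⟨x, y⟩ hxy
  obtain ⟨i, rfl⟩ := (hg.even_of_mem_nonzeroRows x ⟨y, hxy⟩).two_dvd
  have hyt : y ≤ t := ht ⟨_, hxy⟩
  have hiy := hg.row_le_col _ _ hxy
  obtain ⟨j, hj, rfl⟩ := exists_foldCol_eq (m := t + 2) (by lia : y + 2 ≤ t + 2)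
  exact ⟨⟨i, by lia⟩, j, by rwa [unfoldHalf, if_pos hj], rfl⟩

lemma IsFolded.rowNonzero_or_unfoldHalf (hg : IsFolded g) (ht : IsGreatest (nonzeroCols g) t)
    (i : Fin (t + 2)) :
    rowNonzero (unfoldHalf (t + 2) g) i ∨ colNonzero (unfoldHalf (t + 2) g) i.rev := by
  rw [← mem_nonzeroRows_foldHalf_iff succ_lt_of_unfoldHalf_ne_zero, hg.foldHalf_unfoldHalf ht.2]
  rcases Nat.eq_zero_or_pos (i : ℕ) with hi | hi
  · obtain ⟨x, hx⟩ := hg.even_mem_nonzeroCols t ht.1 0 t.zero_le Even.zero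
    obtain rfl : x = 0 := Nat.eq_zero_of_le_zero (hg.row_le_col _ _ hx)
    exact .inl ⟨0, by rwa [hi]⟩
  rw [← mem_nonzeroCols_foldHalf_iff succ_lt_of_unfoldHalf_ne_zero (by grind),
    hg.foldHalf_unfoldHalf ht.2]
  rcases le_or_gt (2 * (i : ℕ)) t with hit | hit
  · have hcol : foldCol (t + 2) i.rev = 2 * i - 1 := by grind [foldCol]
    rw [hcol, or_comm]
    have h := hg.mem_nonzeroCols_or_succ_mem_nonzeroRows t ht.1 (2 * i - 1) (by lia) (by grind)
    rwa [Nat.sub_add_cancel (by lia)] at h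
  · right
    have hcol : foldCol (t + 2) i.rev = t ∨
        foldCol (t + 2) i.rev ≤ t ∧ Even (foldCol (t + 2) i.rev) := by grind [foldCol]
    rcases hcol with hcol | ⟨hle, heven⟩
    · rw [hcol]
      exact ht.1
    · exact hg.even_mem_nonzeroCols t ht.1 _ hle heven

lemma IsFolded.isHalf_unfoldHalf (hg : IsFolded g) (ht : IsGreatest (nonzeroCols g) t) :
    IsHalf (unfoldHalf (t + 2) g) := by
  refine ⟨fun i j hij => ?_, hg.rowNonzero_or_unfoldHalf ht⟩
  obtain ⟨hj, hij⟩ := ite_ne_right_iff.1 hij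
  exact (two_mul_le_foldCol_iff hj).1 (hg.row_le_col _ _ hij)

lemma ne_zero_of_mem_foldedFillings {n k : ℕ} (hn : 1 ≤ n) (hg : g ∈ foldedFillings n k) :
    g ≠ 0 := by
  rintro rfl
  have hsize : (0, 0) = (n, k) := (map_zero sizeFirstRow).symm.trans hg.2
  exact (Nat.pos_iff_ne_zero.1 hn) (Prod.mk.inj hsize).1.symm

lemma bijOn_foldHalf {n : ℕ} (hn : 1 ≤ n) (k : ℕ) :
    (halfMatrices n k).BijOn (fun A => foldHalf A.2) (foldedFillings n k) := by
  have hmaps : (halfMatrices n k).MapsTo (fun A => foldHalf A.2) (foldedFillings n k) := by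
    rintro ⟨m, N⟩ ⟨hN, hsize, hfirst⟩
    exact ⟨hN.isFolded_foldHalf, by rw [sizeFirstRow_foldHalf, hsize, hfirst]⟩
  refine ⟨hmaps, ?_, fun g hg => ?_⟩
  · rintro ⟨m, N⟩ hmem ⟨m', N'⟩ ⟨hN', -, -⟩ h
    replace h : foldHalf N = foldHalf N' := h
    have hN : IsHalf N := hmem.1
    obtain ⟨t, ht⟩ := exists_isGreatest_nonzeroCols (ne_zero_of_mem_foldedFillings hn (hmaps hmem))
    obtain rfl : m = m' := (hN.dim_eq ht).trans (hN'.dim_eq (h ▸ ht)).symm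
    exact congrArg _ <| injOn_relabel injOn_foldCell (fun c => hN.succ_lt c.1 c.2)
      (fun c => hN'.succ_lt c.1 c.2) h
  · obtain ⟨t, ht⟩ := exists_isGreatest_nonzeroCols (ne_zero_of_mem_foldedFillings hn hg)
    have hfold := hg.1.foldHalf_unfoldHalf ht.2
    have hsize := hg.2
    rw [← hfold, sizeFirstRow_foldHalf, Prod.mk.injEq] at hsize
    exact ⟨⟨t + 2, unfoldHalf (t + 2) g⟩, ⟨hg.1.isHalf_unfoldHalf ht, hsize⟩, hfold⟩

end Fold

/-- `|M(n,k,0)| = |RM(n,k)|` for all `n ≥ 1`, `k ≥ 0`. -/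
theorem stmt6 (n k : ℕ) (hn : 1 ≤ n) :
    (Mset₃ n k 0).ncard = (RMset₂ n k).ncard := by
  calc (Mset₃ n k 0).ncard
    _ = (halfMatrices n k).ncard := (bijOn_strictNW n k).ncard_eq
    _ = (foldedFillings n k).ncard := (bijOn_foldHalf hn k).ncard_eq
    _ = (colFishburnFillings n k).ncard := (bijOn_spread n k).ncard_eq.symm
    _ = (RMset₂ n k).ncard := (bijOn_transposeFilling n k).ncard_eq.symm
end

section
/- For all n ≥ 1, k ≥ 0 and p ≥ 1, the number of self-dual Fishburn matrices of reduced size n whose first row has sum k and whose diagonal cells have sum p equals the number of row-Fishburn matrices of size n whose last column has sum k and whose first row has sum p; that is, |M(n,k,p)| = |RM(n,k,p)|. -/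
open Finset

/-!
A self-dual Fishburn matrix is determined by its reduced matrix, which is a filling of a triangle of
cells such that every pair of dual lines is met by a nonzero entry; a row-Fishburn matrix is a
filling of the upper triangle such that every row is. In each dimension, inclusion–exclusion over
the lines therefore gives the generating function as an alternating sum of products of geometric
series.

For row-Fishburn matrices this sum factors over the rows. For self-dual matrices, summing over
the two outermost lines first gives a recursion in the dimension with step two, and summing the
recursion over all dimensions gives the functional equation `V(e) = c (1 + (a e - 1) V(a e))`, which
determines `V` by iteration. The two total generating functions turn out to differ by a series that
does not involve the variable `z` marking the diagonal cells, respectively the first row. So their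
coefficients agree at `z ^ p` for `p ≥ 1`.
-/

section AlternatingSum

variable {J R : Type*} [DecidableEq J] [CommRing R]

/-- The inclusion–exclusion sum of a set function `f` over the subsets of `L`, indexed by the set
`T` of omitted elements. -/
def altSum (L : Finset J) (f : Finset J → R) : R :=
  ∑ T ∈ L.powerset, (-1) ^ #T * f (L \ T)

theorem altSum_congr {L : Finset J} {f g : Finset J → R} (h : ∀ S ⊆ L, f S = g S) :
    altSum L f = altSum L g :=
  sum_congr rfl fun _ _ => by rw [h _ sdiff_subset]

theorem mul_altSum (r : R) (L : Finset J) (f : Finset J → R) :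
    r * altSum L f = altSum L fun S => r * f S := by
  simp only [altSum, mul_sum, mul_left_comm]

theorem altSum_sub (L : Finset J) (f g : Finset J → R) :
    altSum L f - altSum L g = altSum L fun S => f S - g S := by
  simp only [altSum, mul_sub, sum_sub_distrib]

theorem altSum_sum {κ : Type*} (s : Finset κ) (L : Finset J) (f : κ → Finset J → R) :
    altSum L (fun S => ∑ k ∈ s, f k S) = ∑ k ∈ s, altSum L (f k) := by
  simp only [altSum, mul_sum]
  exact sum_comm

theorem map_altSum {R' : Type*} [CommRing R'] (φ : R →+ R') (L : Finset J) (f : Finset J → R) :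
    φ (altSum L f) = altSum L fun S => φ (f S) := by
  simp only [altSum, map_sum]
  refine sum_congr rfl fun T _ => ?_
  rcases Nat.even_or_odd #T with h | h <;> simp [h.neg_one_pow]

theorem altSum_insert {a : J} {L : Finset J} (ha : a ∉ L) (f : Finset J → R) :
    altSum (insert a L) f = altSum L fun S => f (insert a S) - f S := by
  have keep_a : ∀ T ∈ L.powerset,
      (-1) ^ #T * f (insert a L \ T) = (-1) ^ #T * f (insert a (L \ T)) := fun T hT => by
    rw [insert_sdiff_of_notMem _ fun h => ha (mem_powerset.1 hT h)]
  have omit_a : ∀ T ∈ L.powerset,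
      (-1) ^ #(insert a T) * f (insert a L \ insert a T) =
        -((-1) ^ #T * f (L \ T)) := fun T hT => by
    rw [card_insert_of_notMem fun h => ha (mem_powerset.1 hT h), insert_sdiff_insert,
      sdiff_insert_of_notMem ha, pow_succ]
    ring
  rw [← altSum_sub, altSum, sum_powerset_insert ha, sum_congr rfl keep_a, sum_congr rfl omit_a,
    sum_neg_distrib, ← sub_eq_add_neg]
  rfl

theorem altSum_map {I : Type*} [DecidableEq I] (φ : I ↪ J) (L : Finset I)
    (f : Finset J → R) : altSum (L.map φ) f = altSum L fun S => f (S.map φ) := by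
  induction L using Finset.induction_on generalizing f with
  | empty => simp [altSum]
  | insert a L ha ih =>
    rw [map_insert, altSum_insert (by rwa [mem_map' φ]), ih, altSum_insert ha]
    simp only [map_insert]

theorem altSum_prod (L : Finset J) (u v : J → R) :
    altSum L (fun S => (∏ l ∈ S, u l) * ∏ l ∈ L \ S, v l) = ∏ l ∈ L, (u l - v l) := by
  rw [prod_sub, altSum]
  refine sum_congr rfl fun T hT => ?_
  rw [Finset.sdiff_sdiff_eq_self (mem_powerset.1 hT), mul_assoc]

theorem altSum_ite_subset {T L : Finset J} (h : T ⊆ L) :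
    altSum L (fun S => if T ⊆ S then (1 : R) else 0) = if T = L then 1 else 0 := by
  have subset_iff : ∀ S, T ⊆ S ↔ ∀ l ∈ L \ S, l ∉ T := fun S => by grind
  have indicator : ∀ S ⊆ L, (if T ⊆ S then (1 : R) else 0) =
      (∏ _l ∈ S, 1) * ∏ l ∈ L \ S, if l ∉ T then 1 else 0 := fun S _ => by
    rw [prod_const_one, one_mul, prod_boole]
    exact if_congr (subset_iff S) rfl rfl
  have one_sub_indicator : ∀ l, (1 : R) - (if l ∉ T then 1 else 0) = if l ∈ T then 1 else 0 :=
    fun l => by by_cases hl : l ∈ T <;> simp [hl]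
  rw [altSum_congr indicator, altSum_prod, prod_congr rfl fun l _ => one_sub_indicator l,
    prod_boole]
  exact if_congr ⟨h.antisymm, fun hT => hT.ge⟩ rfl rfl

end AlternatingSum

section Coverings

open PowerSeries

variable {ι J R : Type*} [DecidableEq ι] [DecidableEq J] [CommRing R]

/-- The geometric series `∑ wᵛ Xᵛ`, the generating function of one matrix entry of weight `w`. -/
noncomputable def geomSeries (w : R) : R⟦X⟧ := PowerSeries.mk (w ^ ·)

theorem X_dvd_geomSeries_sub_one (w : R) : X ∣ geomSeries w - 1 := by
  rw [X_dvd_iff, map_sub, ← coeff_zero_eq_constantCoeff_apply, geomSeries, coeff_mk, pow_zero,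
    map_one, sub_self]

theorem map_geomSeries {S : Type*} [CommRing S] (f : R →+* S) (w : R) :
    PowerSeries.map f (geomSeries w) = geomSeries (f w) := by
  ext; simp [geomSeries]

theorem coeff_prod_geomSeries (s : Finset ι) (w : ι → R) (n : ℕ) :
    coeff n (∏ i ∈ s, geomSeries (w i)) =
      ∑ g ∈ finsuppAntidiag s n, g.prod fun i v => w i ^ v := by
  simp only [coeff_prod, geomSeries, coeff_mk]
  refine sum_congr rfl fun g hg => ?_
  rw [Finsupp.prod_of_support_subset _ (mem_finsuppAntidiag.1 hg).2 _ fun _ _ => pow_zero _]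

/-- The fillings of the cells `s` by natural numbers of sum `n` whose nonzero entries together
cover exactly the lines `L`, where the cell `i` lies on the lines `C i`. -/
def coverings (s : Finset ι) (C : ι → Finset J) (L : Finset J) (n : ℕ) : Finset (ι →₀ ℕ) :=
  {g ∈ finsuppAntidiag s n | g.support.biUnion C = L}

/-- The generating function of `coverings s C L`, a filling being weighted by `∏ w i ^ g i`;
see `coeff_coverSeries`. -/
noncomputable def coverSeries (s : Finset ι) (C : ι → Finset J) (L : Finset J) (w : ι → R) :
    R⟦X⟧ :=
  altSum L fun S => ∏ i ∈ s with C i ⊆ S, geomSeries (w i)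

theorem finsuppAntidiag_filter_subset (s : Finset ι) (C : ι → Finset J) (S : Finset J) (n : ℕ) :
    finsuppAntidiag {i ∈ s | C i ⊆ S} n =
      {g ∈ finsuppAntidiag s n | g.support.biUnion C ⊆ S} := by
  ext g
  simp only [mem_finsuppAntidiag', mem_filter, subset_iff]
  grind

theorem coeff_coverSeries {s : Finset ι} {C : ι → Finset J} {L : Finset J}
    (hC : ∀ i ∈ s, C i ⊆ L) (w : ι → R) (n : ℕ) :
    coeff n (coverSeries s C L w) = ∑ g ∈ coverings s C L n, g.prod fun i v => w i ^ v := by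
  have coeff_term : ∀ S, coeff n (∏ i ∈ s with C i ⊆ S, geomSeries (w i)) =
      ∑ g ∈ finsuppAntidiag s n,
        (g.prod fun i v => w i ^ v) * if g.support.biUnion C ⊆ S then 1 else 0 := fun S => by
    simp only [coeff_prod_geomSeries, finsuppAntidiag_filter_subset, sum_filter, mul_ite, mul_one,
      mul_zero]
  have coeff_altSum := map_altSum (coeff (R := R) n).toAddMonoidHom L
    fun S => ∏ i ∈ s with C i ⊆ S, geomSeries (w i)
  simp only [LinearMap.toAddMonoidHom_coe, coeff_term, altSum_sum, ← mul_altSum] at coeff_altSum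
  rw [coverSeries, coeff_altSum, coverings, sum_filter]
  refine sum_congr rfl fun g hg => ?_
  rw [altSum_ite_subset, mul_ite, mul_one, mul_zero]
  exact biUnion_subset.2 fun i hi => hC i ((mem_finsuppAntidiag.1 hg).2 hi)

/-- The weight of a cell when membership in `F` is marked by `y` and membership in `D` by `z`. -/
def markWeight (y z : R) (F D : Prop) [Decidable F] [Decidable D] : R :=
  (if F then y else 1) * if D then z else 1

end Coverings

section MarkedCoverings

variable {ι J R : Type*} [CommRing R] (F D : ι → Prop) [DecidablePred F] [DecidablePred D]

theorem prod_markWeight_pow (y z : R) (g : ι →₀ ℕ) :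
    (g.prod fun i v => markWeight y z (F i) (D i) ^ v) =
      y ^ (g.sum fun i v => if F i then v else 0) *
        z ^ (g.sum fun i v => if D i then v else 0) := by
  simp only [Finsupp.prod, Finsupp.sum, ← prod_pow_eq_pow_sum, ← prod_mul_distrib, markWeight,
    mul_pow]
  refine prod_congr rfl fun i _ => ?_
  split_ifs <;> simp

open Polynomial in
theorem card_filter_coverings [DecidableEq ι] [DecidableEq J] {s : Finset ι} {C : ι → Finset J}
    {L : Finset J} (hC : ∀ i ∈ s, C i ⊆ L) (n k p : ℕ) :
    (#{g ∈ coverings s C L n | (g.sum fun i v => if F i then v else 0) = k ∧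
        (g.sum fun i v => if D i then v else 0) = p} : ℤ) =
      ((PowerSeries.coeff n (coverSeries s C L fun i =>
        markWeight (Polynomial.C X : ℤ[X][X]) X (F i) (D i))).coeff p).coeff k := by
  simp only [coeff_coverSeries hC, prod_markWeight_pow, finsetSum_coeff, card_filter, Nat.cast_sum,
    Nat.cast_ite, Nat.cast_one, Nat.cast_zero]
  refine sum_congr rfl fun g _ => ?_
  rw [← C_pow, coeff_C_mul_X_pow, apply_ite (coeff · k), coeff_X_pow, coeff_zero]
  grind

end MarkedCoverings

section Telescoping

variable {R : Type*} [CommRing R]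

/-- The alternating sum over the lines of an `m`-dimensional triangle of nested cells, where
central cells have weight `c`, the others have weight `a`, and each line has an extra factor `e`;
see `altSum_nestedProd_eq_layerPoly`. -/
def layerPoly (a c : R) : ℕ → R → R
  | 0, _ => 1
  | 1, e => c * e - 1
  | m + 2, e => (a * e - 1) * (c * e) * layerPoly a c m (a * e) - (e - 1) * layerPoly a c m e

/-- The generating function of the reduced `m × m` self-dual Fishburn matrices, where a cell has
series `b`, `c`, `d` or `a` if it lies in the first row only, on the diagonal only, on both or on
neither; see `coverSeries_superTriCells`. -/
def selfDualPoly (a b c d : R) : ℕ → R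
  | 0 => 1
  | 1 => d - 1
  | m + 2 => d * (b - 1) * layerPoly a c m b

/-- The generating function of the `m × m` row-Fishburn matrices, where a cell has series `b`, `c`,
`d` or `a` if it lies in the last column only, in the first row only, in both or in neither; see
`coverSeries_upperTriCells`. -/
def rowFishburnPoly (a b c d : R) : ℕ → R
  | 0 => 1
  | m + 1 => (c ^ m * d - 1) * ∏ i ∈ range m, (a ^ i * b - 1)

/-- The partial sum that results from iterating `V e = 1 + c * (e - 1) * V (a * e)`;
see `prodSum_succ`. -/
def prodSum (a c : R) (N : ℕ) (e : R) : R :=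
  ∑ j ∈ range N, c ^ j * ∏ i ∈ range j, (a ^ i * e - 1)

theorem prodSum_succ (a c : R) (N : ℕ) (e : R) :
    prodSum a c (N + 1) e = 1 + c * (e - 1) * prodSum a c N (a * e) := by
  have shift : ∀ i, a ^ (i + 1) * e = a ^ i * (a * e) := fun i => by ring
  simp only [prodSum, sum_range_succ', prod_range_succ', mul_sum, shift]
  simp only [range_zero, prod_empty, pow_zero, one_mul, mul_one, add_comm (1 : R)]
  congr 1
  exact sum_congr rfl fun j _ => by ring

theorem map_prodSum {S : Type*} [CommRing S] (f : R →+* S) (a c : R) (N : ℕ)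
    (e : R) : f (prodSum a c N e) = prodSum (f a) (f c) N (f e) := by
  simp only [prodSum, map_sum, map_mul, map_pow, map_prod, map_sub, map_one]

variable {x a b c d e : R}

theorem dvd_mul_sub_one (ha : x ∣ a - 1) (he : x ∣ e - 1) : x ∣ a * e - 1 := by
  convert dvd_add (ha.mul_right e) he using 1
  ring

theorem dvd_pow_mul_sub_one (ha : x ∣ a - 1) (he : x ∣ e - 1) (i : ℕ) : x ∣ a ^ i * e - 1 :=
  dvd_mul_sub_one (ha.trans (sub_one_dvd_pow_sub_one a i)) he

theorem pow_dvd_layerPoly (ha : x ∣ a - 1) :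
    ∀ (m : ℕ) {e : R}, x ∣ e - 1 → x ^ (m / 2) ∣ layerPoly a c m e
  | 0, _, _ => by simp
  | 1, _, _ => by simp
  | m + 2, e, he => by
    have hae := dvd_mul_sub_one ha he
    rw [Nat.add_div_right m two_pos, pow_succ', layerPoly]
    exact dvd_sub (mul_dvd_mul (hae.mul_right _) (pow_dvd_layerPoly ha m hae))
      (mul_dvd_mul he (pow_dvd_layerPoly ha m he))

theorem pow_dvd_selfDualPoly (ha : x ∣ a - 1) (hb : x ∣ b - 1) (m : ℕ) :
    x ^ (m / 2 + 1) ∣ selfDualPoly a b c d (m + 2) := by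
  rw [pow_succ', selfDualPoly]
  exact mul_dvd_mul (hb.mul_left _) (pow_dvd_layerPoly ha m hb)

theorem pow_dvd_rowFishburnPoly (ha : x ∣ a - 1) (hb : x ∣ b - 1) (m : ℕ) :
    x ^ m ∣ rowFishburnPoly a b c d (m + 1) := by
  refine Dvd.dvd.mul_left ?_ _
  simpa using prod_dvd_prod_of_dvd (s := range m) (fun _ => x) _
    fun i _ => dvd_pow_mul_sub_one ha hb i

theorem sum_layerPoly_add_two (a c e : R) (N : ℕ) :
    ∑ m ∈ range (N + 2), layerPoly a c m e =
      c * e + (a * e - 1) * (c * e) * ∑ m ∈ range N, layerPoly a c m (a * e)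
        - (e - 1) * ∑ m ∈ range N, layerPoly a c m e := by
  simp only [sum_range_succ' _ (N + 1), sum_range_succ' _ N, layerPoly, sum_sub_distrib, mul_sum]
  ring

/-- Summing the recursion for `layerPoly` over `m` gives the functional equation
`V e = c (1 + (a e - 1) V (a e))` for the generating function `V`, here modulo `x ^ N`. -/
theorem sum_layerPoly_functional_equation (ha : x ∣ a - 1) (he : x ∣ e - 1) (N : ℕ) :
    x ^ N ∣ (∑ m ∈ range (2 * N), layerPoly a c m e) -
      c * (1 + (a * e - 1) * ∑ m ∈ range (2 * N), layerPoly a c m (a * e)) := by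
  have coprime : IsCoprime (x ^ N) e := by
    obtain ⟨q, hq⟩ := he
    exact IsCoprime.pow_left ⟨-q, 1, by linear_combination hq⟩
  have even_term : x ^ N ∣ layerPoly a c (2 * N) e := by
    simpa using pow_dvd_layerPoly (c := c) ha (2 * N) he
  have odd_term : x ^ N ∣ layerPoly a c (2 * N + 1) e := by
    simpa [Nat.mul_add_div] using pow_dvd_layerPoly (c := c) ha (2 * N + 1) he
  have recursion := sum_layerPoly_add_two a c e (2 * N)
  rw [sum_range_succ, sum_range_succ] at recursion
  refine coprime.dvd_of_dvd_mul_left ((dvd_add even_term odd_term).neg_right.trans ?_)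
  exact dvd_of_eq (by linear_combination -recursion)

theorem sum_layerPoly_sub_prodSum (ha : x ∣ a - 1) {N k : ℕ} (hk : k ≤ N) (he : x ∣ e - 1) :
    x ^ k ∣ (∑ m ∈ range (2 * N), layerPoly a c m e) - c * prodSum a c k (a * e) := by
  induction k generalizing e with
  | zero => simp
  | succ k ih =>
    have hae := dvd_mul_sub_one ha he
    have step := (pow_dvd_pow x hk).trans (sum_layerPoly_functional_equation (c := c) ha he N)
    have tail := mul_dvd_mul (hae.mul_left c) (ih (Nat.le_of_succ_le hk) hae)
    rw [← pow_succ'] at tail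
    convert dvd_add step tail using 1
    rw [prodSum_succ]
    ring

theorem sum_selfDualPoly_add_two (a b c d : R) (N : ℕ) :
    ∑ m ∈ range (N + 2), selfDualPoly a b c d m =
      d * (1 + (b - 1) * ∑ m ∈ range N, layerPoly a c m b) := by
  simp only [sum_range_succ' _ (N + 1), sum_range_succ' _ N, selfDualPoly, ← mul_sum]
  ring

theorem sum_rowFishburnPoly_add_one (a b c d : R) (N : ℕ) :
    ∑ m ∈ range (N + 1), rowFishburnPoly a b c d m =
      1 + d * prodSum a c N b - prodSum a 1 N b := by
  simp only [sum_range_succ', rowFishburnPoly, prodSum, sub_mul, sum_sub_distrib, mul_sum, one_pow,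
    one_mul]
  rw [add_comm, add_sub_assoc]
  congr 2
  exact sum_congr rfl fun j _ => by ring

theorem sum_selfDualPoly_sub_sum_rowFishburnPoly (ha : x ∣ a - 1) (hb : x ∣ b - 1) (N : ℕ) :
    x ^ (N + 1) ∣ (∑ m ∈ range (2 * N + 2), selfDualPoly a b c d m) -
      (∑ m ∈ range (N + 2), rowFishburnPoly a b c d m) - (prodSum a 1 (N + 1) b - 1) := by
  have layers := mul_dvd_mul (hb.mul_left d)
    (sum_layerPoly_sub_prodSum (c := c) ha (le_refl N) hb)
  rw [← pow_succ'] at layers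
  convert layers using 1
  rw [sum_selfDualPoly_add_two, sum_rowFishburnPoly_add_one, prodSum_succ a c]
  ring

end Telescoping

section NestedProducts

variable {R : Type*} [CommRing R]

/-- The positions of `m` consecutive lines, placed at distance two and symmetrically about `0`. -/
noncomputable def centeredLines (m : ℕ) : Finset ℤ := {l ∈ Ioo (-m : ℤ) m | (l + m) % 2 = 1}

theorem mem_centeredLines {m : ℕ} {l : ℤ} :
    l ∈ centeredLines m ↔ (-m < l ∧ l < m) ∧ (l + m) % 2 = 1 := by
  rw [centeredLines, mem_filter, mem_Ioo]

theorem centeredLines_zero : centeredLines 0 = ∅ := rfl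

theorem centeredLines_one : centeredLines 1 = {0} := rfl

theorem centeredLines_add_two (m : ℕ) :
    centeredLines (m + 2) = insert (m + 1 : ℤ) (insert (-(m + 1) : ℤ) (centeredLines m)) := by
  ext l
  simp only [mem_insert, mem_centeredLines]
  lia

theorem centeredLines_subset_add_two (m : ℕ) : centeredLines m ⊆ centeredLines (m + 2) := by
  rw [centeredLines_add_two]
  exact (subset_insert _ _).trans (subset_insert _ _)

/-- The product of the weights `A h j` of the cells `(h, j)` on the lines in `S` that satisfy
`|j| ≤ h`, with an additional factor `e` for every line. -/
def nestedProd (A : ℤ → ℤ → R) (e : R) (S : Finset ℤ) : R :=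
  e ^ #S * ∏ h ∈ S, ∏ j ∈ S with -h ≤ j ∧ j ≤ h, A h j

theorem nestedProd_insert_neg (A : ℤ → ℤ → R) (e : R) {H : ℤ} {S : Finset ℤ} (hH : 0 < H)
    (hS : ∀ l ∈ S, -H < l ∧ l < H) : nestedProd A e (insert (-H) S) = e * nestedProd A e S := by
  have notMem : -H ∉ S := fun h => (hS _ h).1.ne rfl
  have empty_row : {j ∈ insert (-H) S | - -H ≤ j ∧ j ≤ -H} = ∅ :=
    filter_false_of_mem fun j _ => by lia
  have old_row : ∀ h ∈ S, ∏ j ∈ insert (-H) S with -h ≤ j ∧ j ≤ h, A h j =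
      ∏ j ∈ S with -h ≤ j ∧ j ≤ h, A h j := fun h hh => by
    rw [filter_insert, if_neg fun hH => (hS h hh).2.not_ge (neg_le_neg_iff.1 hH.1)]
  rw [nestedProd, card_insert_of_notMem notMem, prod_insert notMem, empty_row, prod_empty, one_mul,
    prod_congr rfl old_row, pow_succ', mul_assoc, nestedProd]

theorem nestedProd_insert (A : ℤ → ℤ → R) (e : R) {H : ℤ} {S : Finset ℤ} (hH : 0 < H)
    (hS : ∀ l ∈ S, -H ≤ l ∧ l < H) :
    nestedProd A e (insert H S) = e * A H H * (∏ j ∈ S, A H j) * nestedProd A e S := by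
  have notMem : H ∉ S := fun h => (hS _ h).2.ne rfl
  have new_row : {j ∈ insert H S | -H ≤ j ∧ j ≤ H} = insert H S :=
    filter_true_of_mem ((forall_mem_insert _ _ _).2
      ⟨by lia, fun l hl => ⟨(hS l hl).1, (hS l hl).2.le⟩⟩)
  have old_row : ∀ h ∈ S, ∏ j ∈ insert H S with -h ≤ j ∧ j ≤ h, A h j =
      ∏ j ∈ S with -h ≤ j ∧ j ≤ h, A h j := fun h hh => by
    rw [filter_insert, if_neg fun hH => (hS h hh).2.not_ge hH.2]
  rw [nestedProd, card_insert_of_notMem notMem, prod_insert notMem, new_row, prod_insert notMem,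
    prod_congr rfl old_row, nestedProd]
  ring

theorem altSum_nestedProd_zero (A : ℤ → ℤ → R) (e : R) :
    altSum (centeredLines 0) (nestedProd A e) = 1 := by
  simp [centeredLines_zero, altSum, nestedProd]

theorem altSum_nestedProd_one (A : ℤ → ℤ → R) (e : R) :
    altSum (centeredLines 1) (nestedProd A e) = A 0 0 * e - 1 := by
  rw [centeredLines_one, ← insert_empty_eq, altSum_insert (notMem_empty 0)]
  simp [altSum, nestedProd, filter_singleton, mul_comm]

theorem altSum_nestedProd_add_two {A : ℤ → ℤ → R} {a c : R} (e : R) {m : ℕ}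
    (hc : A (m + 1) (m + 1) = c) (ha : ∀ j ∈ centeredLines (m + 2), j < m + 1 → A (m + 1) j = a) :
    altSum (centeredLines (m + 2)) (nestedProd A e) =
      (a * e - 1) * (c * e) * altSum (centeredLines m) (nestedProd A (a * e)) -
        (e - 1) * altSum (centeredLines m) (nestedProd A e) := by
  have inner_bound : ∀ l ∈ centeredLines m, -(m + 1 : ℤ) < l ∧ l < m + 1 := fun l hl => by
    have := mem_centeredLines.1 hl
    lia
  have neg_notMem : -(m + 1 : ℤ) ∉ centeredLines m := fun h => (inner_bound _ h).1.ne rfl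
  have bound : ∀ l ∈ insert (-(m + 1 : ℤ)) (centeredLines m), -(m + 1 : ℤ) ≤ l ∧ l < m + 1 :=
    (forall_mem_insert _ _ _).2 ⟨by lia, fun l hl => (inner_bound l hl).imp_left le_of_lt⟩
  have notMem : (m + 1 : ℤ) ∉ insert (-(m + 1 : ℤ)) (centeredLines m) :=
    fun h => (bound _ h).2.ne rfl
  have insert_last : ∀ S ⊆ insert (-(m + 1 : ℤ)) (centeredLines m),
      nestedProd A e (insert (m + 1 : ℤ) S) = e * c * a ^ #S * nestedProd A e S := fun S hS => by
    rw [nestedProd_insert A e (by positivity) fun l hl => bound l (hS hl), hc]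
    rw [prod_congr rfl fun l hl => ha l (centeredLines_add_two m ▸ mem_insert_of_mem (hS hl))
      (bound l (hS hl)).2, prod_const]
  rw [centeredLines_add_two, altSum_insert notMem, altSum_insert neg_notMem, mul_altSum, mul_altSum,
    altSum_sub]
  refine altSum_congr fun S hS => ?_
  rw [insert_last _ (insert_subset_insert _ hS), insert_last S (hS.trans (subset_insert _ _)),
    nestedProd_insert_neg A e (by positivity) fun l hl => inner_bound l (hS hl),
    card_insert_of_notMem fun h => neg_notMem (hS h)]
  simp only [nestedProd, mul_pow]
  ring

theorem altSum_nestedProd_eq_layerPoly {A : ℤ → ℤ → R} {a c : R} : ∀ {m : ℕ} (e : R),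
    (∀ h ∈ centeredLines m, A h h = c) →
    (∀ h ∈ centeredLines m, ∀ j ∈ centeredLines m, j < h → A h j = a) →
      altSum (centeredLines m) (nestedProd A e) = layerPoly a c m e
  | 0, e, _, _ => altSum_nestedProd_zero A e
  | 1, e, hc, _ => by rw [altSum_nestedProd_one, hc 0 (by decide), layerPoly]
  | m + 2, e, hc, ha => by
    have last : (m + 1 : ℤ) ∈ centeredLines (m + 2) := centeredLines_add_two m ▸ mem_insert_self _ _
    have inner := centeredLines_subset_add_two m
    have ih : ∀ e, altSum (centeredLines m) (nestedProd A e) = layerPoly a c m e := fun e =>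
      altSum_nestedProd_eq_layerPoly e (fun h hh => hc h (inner hh))
        fun h hh j hj => ha h (inner hh) j (inner hj)
    rw [altSum_nestedProd_add_two e (hc _ last) (ha _ last), ih, ih, layerPoly]

theorem altSum_nestedProd_eq_selfDualPoly {A : ℤ → ℤ → R} {a b c d : R} : ∀ {m : ℕ},
    A (m - 1) (m - 1) = d →
    (∀ j ∈ centeredLines m, j < m - 1 → A (m - 1) j = b) →
    (∀ h ∈ centeredLines m, h < m - 1 → A h h = c) →
    (∀ h ∈ centeredLines m, h < m - 1 → ∀ j ∈ centeredLines m, j < h → A h j = a) →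
      altSum (centeredLines m) (nestedProd A 1) = selfDualPoly a b c d m
  | 0, _, _, _, _ => altSum_nestedProd_zero A 1
  | 1, hd, _, _, _ => by
    rw [altSum_nestedProd_one, mul_one, selfDualPoly, ← hd]
    rfl
  | m + 2, hd, hb, hc, ha => by
    have last_eq : ((m + 2 : ℕ) - 1 : ℤ) = m + 1 := by lia
    have inner := centeredLines_subset_add_two m
    have inner_lt : ∀ h ∈ centeredLines m, h < (m + 1 : ℤ) := fun h hh => by
      have := mem_centeredLines.1 hh
      lia
    rw [last_eq] at hd hb hc ha
    rw [altSum_nestedProd_add_two 1 hd hb, mul_one, mul_one,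
      altSum_nestedProd_eq_layerPoly (a := a) (c := c), selfDualPoly]
    · ring
    · exact fun h hh => hc h (inner hh) (inner_lt h hh)
    · exact fun h hh j hj => ha h (inner hh) (inner_lt h hh) j (inner hj)

end NestedProducts

section CoverSeries

variable {R : Type*} [CommRing R]

/-- The position in `centeredLines m` of the line with index `l`; reversing the order of the lines
negates positions. -/
def centeredPos (m : ℕ) : Fin m ↪ ℤ where
  toFun l := 2 * l + 1 - m
  inj' l l' h := by
    have : (l : ℤ) = l' := by linarith
    exact Fin.ext (by exact_mod_cast this)

theorem centeredPos_apply {m : ℕ} (l : Fin m) : centeredPos m l = 2 * l + 1 - m := rfl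

theorem map_centeredPos_univ (m : ℕ) : univ.map (centeredPos m) = centeredLines m := by
  ext l
  simp only [mem_map, mem_univ, true_and, mem_centeredLines, centeredPos_apply]
  constructor
  · rintro ⟨i, rfl⟩
    have := i.is_lt
    lia
  · exact fun h => ⟨⟨((l + m - 1) / 2).toNat, by lia⟩, by simp only; lia⟩

/-- The cells of a super triangular matrix. -/
def superTriCells (m : ℕ) : Finset (Fin m × Fin m) := {q | q.1 ≤ q.2 ∧ (q.1 + q.2 + 1 : ℕ) ≤ m}

theorem mem_superTriCells {m : ℕ} {q : Fin m × Fin m} :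
    q ∈ superTriCells m ↔
      -centeredPos m q.1.rev ≤ centeredPos m q.2 ∧ centeredPos m q.2 ≤ centeredPos m q.1.rev := by
  simp only [superTriCells, mem_filter, mem_univ, true_and, centeredPos_apply, Fin.le_def,
    Fin.val_rev]
  lia

/-- The lines of a self-dual matrix through a cell, where row `l.rev`, being dual to column `l`, is
identified with it. -/
def dualLines {m : ℕ} (q : Fin m × Fin m) : Finset (Fin m) := {q.2, q.1.rev}

theorem prod_dualLines_subset {m : ℕ} (A : ℤ → ℤ → R) (S : Finset (Fin m)) :
    ∏ q ∈ superTriCells m with dualLines q ⊆ S, A (centeredPos m q.1.rev) (centeredPos m q.2) =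
      nestedProd A 1 (S.map (centeredPos m)) := by
  simp only [nestedProd, one_pow, one_mul, prod_map, filter_map]
  rw [prod_sigma']
  refine prod_nbij' (fun q => ⟨q.1.rev, q.2⟩) (fun q => (q.1.rev, q.2)) ?_ ?_ ?_ ?_ ?_
  · simp only [dualLines, insert_subset_iff, singleton_subset_iff, mem_filter, mem_superTriCells,
      Function.comp_apply, mem_sigma]
    tauto
  · simp only [Function.comp_apply, mem_sigma, mem_filter, dualLines, insert_subset_iff,
      singleton_subset_iff, mem_superTriCells, Fin.rev_rev]
    tauto
  all_goals simp

theorem coverSeries_superTriCells (m : ℕ) (y z : R) :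
    coverSeries (superTriCells m) dualLines univ (fun q =>
      markWeight y z ((q.1 : ℕ) = 0) ((q.1 + q.2 + 1 : ℕ) = m)) =
      selfDualPoly (geomSeries 1) (geomSeries y) (geomSeries z) (geomSeries (y * z)) m := by
  set A : ℤ → ℤ → PowerSeries R := fun h j => geomSeries (markWeight y z (h = m - 1) (j = h))
  have weight : ∀ q : Fin m × Fin m,
      geomSeries (markWeight y z ((q.1 : ℕ) = 0) ((q.1 + q.2 + 1 : ℕ) = m)) =
        A (centeredPos m q.1.rev) (centeredPos m q.2) := fun q => by
    have first_row : (q.1 : ℕ) = 0 ↔ centeredPos m q.1.rev = m - 1 := by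
      simp only [centeredPos_apply, Fin.val_rev]; lia
    have diagonal : (q.1 + q.2 + 1 : ℕ) = m ↔ centeredPos m q.2 = centeredPos m q.1.rev := by
      simp only [centeredPos_apply, Fin.val_rev]; lia
    simp only [A, first_row, diagonal]
  simp only [coverSeries, weight, prod_dualLines_subset]
  rw [← altSum_map, map_centeredPos_univ]
  apply altSum_nestedProd_eq_selfDualPoly
  · simp [A, markWeight]
  · intro j _ hj
    simp [A, markWeight, hj.ne]
  · intro h _ hh
    simp [A, markWeight, hh.ne]
  · intro h _ hh j _ hj
    simp [A, markWeight, hh.ne, hj.ne]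

/-- The cells of an upper-triangular matrix. -/
def upperTriCells (m : ℕ) : Finset (Fin m × Fin m) := {q | q.1 ≤ q.2}

theorem coverSeries_rows {m : ℕ} (w : Fin m → Fin m → R) :
    coverSeries (upperTriCells m) (fun q => {q.1}) univ (fun q => w q.1 q.2) =
      ∏ i, ((∏ j ∈ Ici i, geomSeries (w i j)) - 1) := by
  have prod_rows : ∀ S ⊆ univ, ∏ q ∈ upperTriCells m with {q.1} ⊆ S, geomSeries (w q.1 q.2) =
      (∏ i ∈ S, ∏ j ∈ Ici i, geomSeries (w i j)) * ∏ _i ∈ univ \ S, 1 := fun S _ => by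
    rw [prod_const_one, mul_one, prod_sigma']
    refine prod_nbij' (fun q => ⟨q.1, q.2⟩) (fun q => (q.1, q.2)) ?_ ?_ ?_ ?_ ?_ <;>
      simp +contextual [upperTriCells]
  rw [coverSeries, altSum_congr prod_rows, altSum_prod]

theorem prod_Ici_geomSeries {m : ℕ} (y z : R) (D : Prop) [Decidable D] (i : Fin m) :
    ∏ j ∈ Ici i, geomSeries (markWeight y z ((j + 1 : ℕ) = m) D) =
      geomSeries (if D then z else 1) ^ (m - (i + 1) : ℕ) *
        geomSeries (y * if D then z else 1) := by
  let last : Fin m := ⟨m - 1, Nat.sub_one_lt i.pos.ne'⟩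
  have split_last : Ici i = insert last (Ico i last) := by
    ext j
    simp only [mem_Ici, mem_insert, mem_Ico, Fin.ext_iff, Fin.le_def, Fin.lt_def, last]
    lia
  have before_last : ∀ j ∈ Ico i last,
      geomSeries (markWeight y z ((j + 1 : ℕ) = m) D) = geomSeries (if D then z else 1) :=
    fun j hj => by
      have : (j : ℕ) < m - 1 := (mem_Ico.1 hj).2
      rw [markWeight, if_neg (by lia), one_mul]
  rw [split_last, prod_insert right_notMem_Ico, prod_congr rfl before_last, prod_const,
    Fin.card_Ico, markWeight, if_pos (show (last + 1 : ℕ) = m by simp only [last]; lia), mul_comm,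
    Nat.sub_sub, Nat.add_comm 1]

theorem coverSeries_upperTriCells (m : ℕ) (y z : R) :
    coverSeries (upperTriCells m) (fun q => {q.1}) univ (fun q =>
      markWeight y z ((q.2 + 1 : ℕ) = m) ((q.1 : ℕ) = 0)) =
      rowFishburnPoly (geomSeries 1) (geomSeries y) (geomSeries z) (geomSeries (y * z)) m := by
  rw [coverSeries_rows fun i j : Fin m => markWeight y z ((j + 1 : ℕ) = m) ((i : ℕ) = 0)]
  simp only [prod_Ici_geomSeries]
  cases m with
  | zero => rfl
  | succ m =>
    simp only [Fin.prod_univ_succ, Fin.val_zero, Fin.val_succ, Nat.add_sub_add_right, tsub_zero,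
      if_true, Nat.add_one_ne_zero, if_false, mul_one, rowFishburnPoly]
    rw [Fin.prod_univ_eq_prod_range fun i => geomSeries (1 : R) ^ (m - (i + 1)) * geomSeries y - 1,
      ← prod_range_reflect fun i => geomSeries (1 : R) ^ i * geomSeries y - 1]
    simp only [Nat.sub_sub, add_comm]

end CoverSeries

section MatrixEntries

/-- A matrix as a finitely supported function on its cells. -/
noncomputable def matrixEntries (m : ℕ) : Mat m ≃ (Fin m × Fin m →₀ ℕ) :=
  (Equiv.curry (Fin m) (Fin m) ℕ).symm.trans Finsupp.equivFunOnFinite.symm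

variable {m : ℕ}

theorem matrixEntries_apply (M : Mat m) (q : Fin m × Fin m) :
    matrixEntries m M q = M q.1 q.2 := rfl

theorem sum_matrixEntries_ite (M : Mat m) (F : Fin m × Fin m → Prop) [DecidablePred F] :
    ((matrixEntries m M).sum fun q v => if F q then v else 0) =
      ∑ i, ∑ j, if F (i, j) then M i j else 0 := by
  rw [Finsupp.sum_fintype _ _ (by simp), Fintype.sum_prod_type]
  rfl

theorem matrixEntries_mem_coverings {J : Type*} [Fintype J] [DecidableEq J] {M : Mat m}
    {s : Finset (Fin m × Fin m)} {C : Fin m × Fin m → Finset J} {n : ℕ} :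
    matrixEntries m M ∈ coverings s C univ n ↔
      (∀ i j, (i, j) ∉ s → M i j = 0) ∧ (∀ l, ∃ i j, M i j ≠ 0 ∧ l ∈ C (i, j)) ∧
        msize M = n := by
  have sum_eq : ((matrixEntries m M).sum fun _ v => v) = msize M := by
    simpa using! sum_matrixEntries_ite M fun _ => True
  simp only [coverings, mem_filter, mem_finsuppAntidiag', sum_eq, subset_iff,
    Finsupp.mem_support_iff, matrixEntries_apply, eq_univ_iff_forall, mem_biUnion, Prod.forall,
    Prod.exists, not_imp_comm (a := _ = 0), ne_eq]
  tauto

end MatrixEntries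

section RowFishburn

/-- The fillings of the cells by the entries of the `m × m` matrices in `RMset₃ n k p`. -/
def rowFishburnFillings (m n k p : ℕ) : Finset (Fin m × Fin m →₀ ℕ) :=
  {g ∈ coverings (upperTriCells m) (fun q => {q.1}) univ n |
    (g.sum fun q v => if (q.2 + 1 : ℕ) = m then v else 0) = k ∧
      (g.sum fun q v => if (q.1 : ℕ) = 0 then v else 0) = p}

theorem matrixEntries_mem_rowFishburnFillings {m n k p : ℕ} {M : Mat m} :
    matrixEntries m M ∈ rowFishburnFillings m n k p ↔ (⟨m, M⟩ : SMat) ∈ RMset₃ n k p := by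
  simp only [rowFishburnFillings, mem_filter, matrixEntries_mem_coverings, sum_matrixEntries_ite,
    upperTriCells, mem_univ, true_and, not_le, mem_singleton, exists_and_right, exists_eq_right',
    RMset₃, RMset₂, RMset, Set.mem_ofPred_eq, UT, rowNonzero, lastColSum, firstRowSum, Fin.lt_def]
  tauto

theorem bijOn_rowFishburnFillings (m n k p : ℕ) :
    Set.BijOn (matrixEntries m) (Sigma.mk m ⁻¹' RMset₃ n k p) (rowFishburnFillings m n k p) := by
  refine (matrixEntries m).bijOn fun M => ?_
  exact matrixEntries_mem_rowFishburnFillings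

end RowFishburn

section SelfDual

variable {m : ℕ} {M : Mat m}

theorem SelfDual.apply_rev (hM : SelfDual M) (i j : Fin m) : M j.rev i.rev = M i j :=
  (congrFun₂ hM i j).symm

theorem reduced_apply_ne_zero {i j : Fin m} :
    reduced M i j ≠ 0 ↔ (i + j + 1 : ℕ) ≤ m ∧ M i j ≠ 0 := by
  rw [reduced, ne_eq, ite_eq_right_iff, Classical.not_imp]

theorem SelfDual.apply_ne_zero (hM : SelfDual M) {i j : Fin m} :
    M i j ≠ 0 ↔ reduced M i j ≠ 0 ∨ reduced M j.rev i.rev ≠ 0 := by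
  simp only [reduced_apply_ne_zero, hM.apply_rev, Fin.val_rev]
  grind

theorem injOn_reduced : Set.InjOn reduced {M : Mat m | SelfDual M} := by
  intro M hM M' hM' h
  have agree : ∀ i j : Fin m, (i + j + 1 : ℕ) ≤ m → M i j = M' i j := fun i j hij => by
    simpa only [reduced, if_pos hij] using congrFun₂ h i j
  ext i j
  by_cases hij : (i + j + 1 : ℕ) ≤ m
  · exact agree i j hij
  · rw [← hM.apply_rev, ← hM'.apply_rev]
    exact agree _ _ (by simp only [Fin.val_rev]; lia)

/-- The self-dual matrix with reduced matrix `N`, for `N` without entries in SE-cells; see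
`reduced_selfDualExtension`. -/
def selfDualExtension (N : Mat m) : Mat m := fun i j => max (N i j) (dual N i j)

theorem selfDual_selfDualExtension (N : Mat m) : SelfDual (selfDualExtension N) := by
  ext i j
  simp only [selfDualExtension, dual, Fin.rev_rev, max_comm]

theorem reduced_selfDualExtension {N : Mat m} (hN : ∀ i j : Fin m, m < i + j + 1 → N i j = 0) :
    reduced (selfDualExtension N) = N := by
  ext i j
  simp only [reduced, selfDualExtension, dual]
  split_ifs with hij
  · rcases hij.lt_or_eq with hlt | heq
    · rw [hN j.rev i.rev (by simp only [Fin.val_rev]; lia), Nat.max_zero]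
    · have hi : i.rev = j := Fin.ext (by simp only [Fin.val_rev]; lia)
      rw [← hi, Fin.rev_rev, max_self]
  · exact (hN i j (by lia)).symm

theorem SelfDual.isFishburn_iff (hM : SelfDual M) :
    IsFishburn M ↔ UT M ∧ ∀ j, colNonzero M j := by
  refine and_congr_right fun _ => and_iff_right_of_imp fun h i => ?_
  obtain ⟨j, hj⟩ := h i.rev
  refine ⟨j.rev, ?_⟩
  rwa [← hM.apply_rev, Fin.rev_rev]

theorem SelfDual.colNonzero_iff_s7 (hM : SelfDual M) (l : Fin m) :
    colNonzero M l ↔ ∃ i j, reduced M i j ≠ 0 ∧ l ∈ dualLines (i, j) := by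
  simp only [colNonzero, hM.apply_ne_zero, dualLines, mem_insert, mem_singleton]
  constructor
  · rintro ⟨i, h | h⟩
    exacts [⟨i, l, h, .inl rfl⟩, ⟨l.rev, i.rev, h, .inr l.rev_rev.symm⟩]
  · rintro ⟨i, j, h, rfl | rfl⟩
    exacts [⟨i, .inl h⟩, ⟨j.rev, .inr (by simpa only [Fin.rev_rev] using h)⟩]

theorem SelfDual.UT_iff (hM : SelfDual M) :
    UT M ↔ ∀ i j, (i, j) ∉ superTriCells m → reduced M i j = 0 := by
  simp only [superTriCells, mem_filter, mem_univ, true_and, Fin.le_def]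
  constructor
  · intro h i j hij
    by_contra hne
    have ⟨hle, hne⟩ := reduced_apply_ne_zero.1 hne
    exact hne (h i j (by lia))
  · intro h i j hij
    by_contra hne
    rcases hM.apply_ne_zero.1 hne with hne | hne
    · exact hne (h i j (by lia))
    · exact hne (h _ _ (by simp only [Fin.val_rev]; lia))

theorem firstRowSum_reduced (M : Mat m) : firstRowSum (reduced M) = firstRowSum M := by
  refine sum_congr rfl fun i _ => sum_congr rfl fun j _ => if_ctx_congr Iff.rfl (fun hi => ?_)
    fun _ => rfl
  exact if_pos (by lia)

theorem diagSum_reduced (M : Mat m) : diagSum (reduced M) = diagSum M := by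
  refine sum_congr rfl fun i _ => sum_congr rfl fun j _ => if_ctx_congr Iff.rfl (fun hij => ?_)
    fun _ => rfl
  exact if_pos hij.le

/-- The fillings of the cells by the entries of the reduced matrices of the `m × m` matrices in
`Mset₃ n k p`. -/
def selfDualFillings (m n k p : ℕ) : Finset (Fin m × Fin m →₀ ℕ) :=
  {g ∈ coverings (superTriCells m) dualLines univ n |
    (g.sum fun q v => if (q.1 : ℕ) = 0 then v else 0) = k ∧
      (g.sum fun q v => if (q.1 + q.2 + 1 : ℕ) = m then v else 0) = p}

theorem matrixEntries_reduced_mem_selfDualFillings {n k p : ℕ} (hM : SelfDual M) :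
    matrixEntries m (reduced M) ∈ selfDualFillings m n k p ↔ (⟨m, M⟩ : SMat) ∈ Mset₃ n k p := by
  have size : msize (reduced M) = reducedSize M := rfl
  have first_row := firstRowSum_reduced M
  have diagonal := diagSum_reduced M
  rw [firstRowSum] at first_row
  rw [diagSum] at diagonal
  simp only [selfDualFillings, mem_filter, matrixEntries_mem_coverings, sum_matrixEntries_ite,
    first_row, diagonal, size, Mset₃, Mset₂, Mset, Set.mem_ofPred_eq, hM, true_and,
    hM.isFishburn_iff, hM.UT_iff, hM.colNonzero_iff_s7, and_assoc]

theorem bijOn_selfDualFillings (m n k p : ℕ) :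
    Set.BijOn (matrixEntries m ∘ reduced) (Sigma.mk m ⁻¹' Mset₃ n k p)
      (selfDualFillings m n k p) := by
  have selfDual : Sigma.mk m ⁻¹' Mset₃ n k p ⊆ {M : Mat m | SelfDual M} := fun M hM => hM.1.1.2.1
  refine ⟨fun M hM => (matrixEntries_reduced_mem_selfDualFillings (selfDual hM)).2 hM,
    (matrixEntries m).injective.comp_injOn (injOn_reduced.mono selfDual), fun g hg => ?_⟩
  obtain ⟨N, rfl⟩ := (matrixEntries m).surjective g
  have support := (matrixEntries_mem_coverings.1 (mem_filter.1 hg).1).1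
  have reduced_eq : reduced (selfDualExtension N) = N := reduced_selfDualExtension fun i j hij =>
    support i j fun h => hij.not_ge (mem_filter.1 h).2.2
  refine ⟨selfDualExtension N, ?_, congrArg _ reduced_eq⟩
  rw [Set.mem_preimage, ← matrixEntries_reduced_mem_selfDualFillings (selfDual_selfDualExtension N),
    reduced_eq]
  exact hg

end SelfDual

section GeneratingFunctions

theorem ncard_eq_sum_card_of_bijOn {α β : ℕ → Type*} {S : Set (Σ m, α m)} {f : ∀ m, α m → β m}
    {T : ∀ m, Finset (β m)} {K : ℕ} (bij : ∀ m, Set.BijOn (f m) (Sigma.mk m ⁻¹' S) (T m))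
    (hT : ∀ m, K ≤ m → T m = ∅) : S.ncard = ∑ m ∈ range K, #(T m) := by
  have total : Set.BijOn (Sigma.map id f) S ((range K).sigma T : Finset (Σ m, β m)) := by
    refine ⟨fun ⟨m, a⟩ ha => ?_, fun ⟨m, a⟩ ha ⟨m₁, a₁⟩ ha₁ h => ?_, fun ⟨m, b⟩ hb => ?_⟩
    · have hfa : f m a ∈ T m := (bij m).mapsTo ha
      refine mem_sigma.2 ⟨mem_range.2 (lt_of_not_ge fun hm => ?_), hfa⟩
      exact notMem_empty _ (hT m hm ▸ hfa)
    · obtain ⟨rfl, hf⟩ := Sigma.mk.inj_iff.1 h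
      exact congrArg (Sigma.mk m) ((bij m).injOn ha ha₁ (eq_of_heq hf))
    · obtain ⟨a, ha, rfl⟩ := (bij m).surjOn (mem_sigma.1 hb).2
      exact ⟨⟨m, a⟩, ha, rfl⟩
  rw [total.ncard_eq, Set.ncard_coe_finset, card_sigma]

open Polynomial

/-- The generating function of the `m × m` self-dual Fishburn matrices, with the entries in the
first row marked by `C X` and those in diagonal cells by `X`. -/
noncomputable def selfDualSeries (m : ℕ) : PowerSeries ℤ[X][X] :=
  selfDualPoly (geomSeries 1) (geomSeries (C X)) (geomSeries X) (geomSeries (C X * X)) m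

/-- The generating function of the `m × m` row-Fishburn matrices, with the entries in the last
column marked by `C X` and those in the first row by `X`. -/
noncomputable def rowFishburnSeries (m : ℕ) : PowerSeries ℤ[X][X] :=
  rowFishburnPoly (geomSeries 1) (geomSeries (C X)) (geomSeries X) (geomSeries (C X * X)) m

theorem card_selfDualFillings (m n k p : ℕ) :
    (#(selfDualFillings m n k p) : ℤ) =
      ((PowerSeries.coeff n (selfDualSeries m)).coeff p).coeff k := by
  rw [selfDualSeries, ← coverSeries_superTriCells]
  exact card_filter_coverings _ _ (fun q _ => subset_univ _) n k p

theorem card_rowFishburnFillings (m n k p : ℕ) :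
    (#(rowFishburnFillings m n k p) : ℤ) =
      ((PowerSeries.coeff n (rowFishburnSeries m)).coeff p).coeff k := by
  rw [rowFishburnSeries, ← coverSeries_upperTriCells]
  exact card_filter_coverings _ _ (fun q _ => subset_univ _) n k p

theorem coeff_selfDualSeries_eq_zero {m n : ℕ} (h : 2 * n + 2 ≤ m) :
    PowerSeries.coeff n (selfDualSeries m) = 0 := by
  obtain ⟨m, rfl⟩ := Nat.exists_eq_add_of_le' (le_of_add_le_right h)
  exact PowerSeries.X_pow_dvd_iff.1 (pow_dvd_selfDualPoly (X_dvd_geomSeries_sub_one _)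
    (X_dvd_geomSeries_sub_one _) m) n (by lia)

theorem coeff_rowFishburnSeries_eq_zero {m n : ℕ} (h : n + 2 ≤ m) :
    PowerSeries.coeff n (rowFishburnSeries m) = 0 := by
  obtain ⟨m, rfl⟩ := Nat.exists_eq_add_of_le' ((Nat.le_add_left 1 (n + 1)).trans h)
  exact PowerSeries.X_pow_dvd_iff.1 (pow_dvd_rowFishburnPoly (X_dvd_geomSeries_sub_one _)
    (X_dvd_geomSeries_sub_one _) m) n (by lia)

theorem ncard_Mset₃ (n k p : ℕ) :
    ((Mset₃ n k p).ncard : ℤ) =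
      ((PowerSeries.coeff n (∑ m ∈ range (2 * n + 2), selfDualSeries m)).coeff p).coeff k := by
  have empty : ∀ m, 2 * n + 2 ≤ m → selfDualFillings m n k p = ∅ := fun m hm => by
    have card := card_selfDualFillings m n k p
    rw [coeff_selfDualSeries_eq_zero hm, coeff_zero, coeff_zero] at card
    exact card_eq_zero.1 (Nat.cast_eq_zero.1 card)
  rw [ncard_eq_sum_card_of_bijOn (fun m => bijOn_selfDualFillings m n k p) empty]
  simp only [Nat.cast_sum, card_selfDualFillings, map_sum, finsetSum_coeff]

theorem ncard_RMset₃ (n k p : ℕ) :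
    ((RMset₃ n k p).ncard : ℤ) =
      ((PowerSeries.coeff n (∑ m ∈ range (n + 2), rowFishburnSeries m)).coeff p).coeff k := by
  have empty : ∀ m, n + 2 ≤ m → rowFishburnFillings m n k p = ∅ := fun m hm => by
    have card := card_rowFishburnFillings m n k p
    rw [coeff_rowFishburnSeries_eq_zero hm, coeff_zero, coeff_zero] at card
    exact card_eq_zero.1 (Nat.cast_eq_zero.1 card)
  rw [ncard_eq_sum_card_of_bijOn (fun m => bijOn_rowFishburnFillings m n k p) empty]
  simp only [Nat.cast_sum, card_rowFishburnFillings, map_sum, finsetSum_coeff]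

theorem coeff_sum_selfDualSeries_eq (n : ℕ) {p : ℕ} (hp : p ≠ 0) :
    (PowerSeries.coeff n (∑ m ∈ range (2 * n + 2), selfDualSeries m)).coeff p =
      (PowerSeries.coeff n (∑ m ∈ range (n + 2), rowFishburnSeries m)).coeff p := by
  set correction : PowerSeries ℤ[X] := prodSum (geomSeries 1) 1 (n + 1) (geomSeries X) - 1
  have diff_dvd := sum_selfDualPoly_sub_sum_rowFishburnPoly (c := geomSeries X)
    (d := geomSeries (C X * X)) (X_dvd_geomSeries_sub_one (1 : ℤ[X][X]))
    (X_dvd_geomSeries_sub_one (C X : ℤ[X][X])) n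
  have correction_eq : PowerSeries.map C correction =
      prodSum (geomSeries (1 : ℤ[X][X])) 1 (n + 1) (geomSeries (C X)) - 1 := by
    simp only [correction, map_sub, map_prodSum, map_geomSeries, map_one]
  have coeff_diff := PowerSeries.X_pow_dvd_iff.1 diff_dvd n n.lt_succ_self
  rw [← correction_eq, map_sub, map_sub, PowerSeries.coeff_map] at coeff_diff
  have := congrArg (coeff · p) (sub_eq_zero.1 coeff_diff)
  rwa [coeff_sub, coeff_C_of_ne_zero hp, sub_eq_zero] at this

end GeneratingFunctions

/-- `|M(n,k,p)| = |RM(n,k,p)|` for all `n ≥ 1`, `k ≥ 0`, `p ≥ 1`. -/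
theorem stmt7 (n k p : ℕ) (hn : 1 ≤ n) (hp : 1 ≤ p) :
    (Mset₃ n k p).ncard = (RMset₃ n k p).ncard := by
  have coeff_eq := coeff_sum_selfDualSeries_eq n (Nat.one_le_iff_ne_zero.1 hp)
  apply Nat.cast_injective (R := ℤ)
  rw [ncard_Mset₃, ncard_RMset₃, coeff_eq]
end

section
/- For every n ≥ 1, the number of self-dual Fishburn matrices of reduced size n is twice the number of row-Fishburn matrices of size n; that is, |M(n)| = 2|RM(n)|. -/
open Finset

/-!
A self-dual matrix is determined by its reduced matrix, and listing the columns of the latter in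
the order first, last, second, second to last, … turns self-dual Fishburn matrices into *zigzags*:
lists of vectors with `1, 1, 2, 2, …` coordinates subject to local conditions. Row-Fishburn
matrices, read from the bottom row up, become *row chains*: lists of nonzero vectors with
`1, 2, 3, …` coordinates. Let `V c` be the generating function of nonzero vectors with `c`
coordinates, and let `Z c` and `R c` be those of the zigzags and row chains whose first vector has
`c + 1` coordinates. Removing the first vector of a row chain gives `R c = 1 + V (c+1) * R (c+1)`.

Removing the first two vectors `v, w` of a zigzag leaves a zigzag `L` starting at `c + 1`. The
triples `(v, w, L)` that do not arise in this way are those in which `w = 0` and coordinate `c`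
vanishes throughout; deleting that coordinate leaves a nonzero vector and a zigzag starting at `c`,
so these triples are counted by `V c * Z c`. Hence
`(1 + V c) * Z c = 1 + V (c+1) + V (c+1) * (1 + V (c+1)) * Z (c+1)`, so that
`1 + (1 + V c) * Z c` satisfies the same recursion as `2 * R c`. They agree, and `V 0 = 0`.
-/

namespace Fishburn

open PowerSeries

section GenFun

variable {α β : Type*}

/-- The generating function of the elements of `S` by size. The coefficients live in `ℕ∞`, so
that it makes sense without assuming that there are finitely many elements of each size. -/
noncomputable def genFun (size : α → ℕ) (S : Set α) : ℕ∞⟦X⟧ :=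
  .mk fun n => {a ∈ S | size a = n}.encard

theorem coeff_genFun (size : α → ℕ) (S : Set α) (n : ℕ) :
    coeff n (genFun size S) = {a ∈ S | size a = n}.encard :=
  coeff_mk _ _

theorem genFun_union (size : α → ℕ) {S T : Set α} (h : Disjoint S T) :
    genFun size (S ∪ T) = genFun size S + genFun size T := by
  ext n
  have hn : Disjoint {a ∈ S | size a = n} {a ∈ T | size a = n} :=
    h.mono (Set.sep_subset _ _) (Set.sep_subset _ _)
  have hunion : {a ∈ S ∪ T | size a = n} = {a ∈ S | size a = n} ∪ {a ∈ T | size a = n} :=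
    Set.ext fun _ => or_and_right
  rw [map_add, coeff_genFun, coeff_genFun, coeff_genFun, hunion, Set.encard_union_eq hn]

theorem genFun_image {f : α → β} {S : Set α} (hf : S.InjOn f) (size : β → ℕ) :
    genFun size (f '' S) = genFun (size ∘ f) S := by
  ext n
  have himage : {b ∈ f '' S | size b = n} = f '' {a ∈ S | size (f a) = n} := by
    ext b
    constructor
    · rintro ⟨⟨a, ha, rfl⟩, hb⟩
      exact ⟨a, ⟨ha, hb⟩, rfl⟩
    · rintro ⟨a, ⟨ha, hb⟩, rfl⟩
      exact ⟨⟨a, ha, rfl⟩, hb⟩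
  simp only [coeff_genFun, himage, (hf.mono (Set.sep_subset _ _)).encard_image,
    Function.comp_apply]

theorem genFun_prod (s : α → ℕ) (t : β → ℕ) (S : Set α) (T : Set β) :
    genFun (fun p => s p.1 + t p.2) (S ×ˢ T) = genFun s S * genFun t T := by
  ext n
  let fiber (q : ℕ × ℕ) : Set (α × β) := {a ∈ S | s a = q.1} ×ˢ {b ∈ T | t b = q.2}
  have hfibers : {p ∈ S ×ˢ T | s p.1 + t p.2 = n} =
      ⋃ q ∈ (antidiagonal n : Set (ℕ × ℕ)), fiber q := by
    ext ⟨a, b⟩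
    simp only [fiber, Set.mem_iUnion, mem_coe, HasAntidiagonal.mem_antidiagonal, Set.mem_prod,
      Set.mem_ofPred_eq, exists_prop, Prod.exists]
    grind
  have hdisj : (antidiagonal n : Set (ℕ × ℕ)).PairwiseDisjoint fiber := by
    rintro ⟨i, j⟩ - ⟨i', j'⟩ - hne
    refine Set.disjoint_left.2 ?_
    rintro ⟨a, b⟩ ⟨⟨-, rfl⟩, -, rfl⟩ ⟨⟨-, rfl⟩, -, rfl⟩
    exact hne rfl
  rw [coeff_genFun, hfibers, (antidiagonal n).finite_toSet.encard_biUnion hdisj,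
    finsum_mem_coe_finset, coeff_mul]
  simp only [fiber, Set.encard_prod, coeff_genFun]

theorem genFun_singleton {size : α → ℕ} {a : α} (ha : size a = 0) : genFun size {a} = 1 := by
  ext n
  rw [coeff_genFun, coeff_one]
  split_ifs with hn
  · rw [Set.sep_eq_self_iff_mem_true.2 (by simp [ha, hn]), Set.encard_singleton]
  · rw [Set.encard_eq_zero, Set.sep_eq_empty_iff_mem_false]
    rintro _ rfl h
    exact hn (h.symm.trans ha)

/-- The recursions determine the coefficients: since `v (c + 1)` has no constant term, the
coefficient of `X ^ n` in `f c` only involves lower coefficients of `f (c + 1)`. -/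
theorem eq_of_forall_eq_add_mul {R : Type*} [Semiring R] {a : R⟦X⟧} {v f g : ℕ → R⟦X⟧}
    (hv : ∀ c, constantCoeff (v c) = 0) (hf : ∀ c, f c = a + v c * f (c + 1))
    (hg : ∀ c, g c = a + v c * g (c + 1)) (c : ℕ) : f c = g c := by
  ext n
  induction n using Nat.strong_induction_on generalizing c with
  | _ n ih =>
    rw [hf, hg, map_add, map_add, coeff_mul, coeff_mul]
    congr 1
    refine Finset.sum_congr rfl fun ⟨i, j⟩ hij => ?_
    rw [HasAntidiagonal.mem_antidiagonal] at hij
    rcases i.eq_zero_or_pos with rfl | hi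
    · rw [coeff_zero_eq_constantCoeff_apply, hv, zero_mul, zero_mul]
    · rw [ih j (by grind)]

end GenFun

section Counting

/-- The vectors of nonnegative integers with coordinates `0, …, c - 1`. A vector is encoded as
the multiset in which `i` has multiplicity the `i`-th entry, so that its size is its cardinality
and `i ∈ v` says that the `i`-th entry is nonzero. -/
def vectors (c : ℕ) : Set (Multiset ℕ) := {v | ∀ i ∈ v, i < c}

/-- The vectors with coordinates `0, …, c - 1` that have a nonzero entry. -/
def nonzeroVectors (c : ℕ) : Set (Multiset ℕ) := {v ∈ vectors c | v ≠ 0}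

/-- The weight of a list of vectors: the sum of all their entries. -/
def weight (L : List (Multiset ℕ)) : ℕ := (L.map Multiset.card).sum

/-- Lists of nonzero vectors with `c + 1`, `c + 2`, `c + 3`, … coordinates. For `c = 0` these are
the rows of row-Fishburn matrices, listed from the bottom row up and each read from right to
left. -/
def IsRowChain : ℕ → List (Multiset ℕ) → Prop
  | _, [] => True
  | c, v :: L => v ∈ nonzeroVectors (c + 1) ∧ IsRowChain (c + 1) L

/-- The condition relating two consecutive vectors `v`, `w` of a zigzag and the list `L` of the
vectors after them: `w` is nonzero, or coordinate `c` is nonzero in `v` or in a vector of `L`. -/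
def Linked (c : ℕ) (v w : Multiset ℕ) (L : List (Multiset ℕ)) : Prop :=
  w ≠ 0 ∨ c ∈ v ∨ ∃ u ∈ L, c ∈ u

/-- Lists of vectors with `c + 1`, `c + 1`, `c + 2`, `c + 2`, … coordinates, in which the vectors
at even positions are nonzero and those at odd positions are subject to `Linked`. For `c = 0` these
are the columns of the reduced matrices of self-dual Fishburn matrices, listed in the order
first, last, second, second to last, …. -/
def IsZigzag : ℕ → List (Multiset ℕ) → Prop
  | _, [] => True
  | c, [v] => v ∈ nonzeroVectors (c + 1)
  | c, v :: w :: L => v ∈ nonzeroVectors (c + 1) ∧ w ∈ vectors (c + 1) ∧ IsZigzag (c + 1) L ∧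
      Linked c v w L

/-- The generating function of nonzero vectors with `c` coordinates by size. -/
noncomputable def vectorGF (c : ℕ) : ℕ∞⟦X⟧ := genFun Multiset.card (nonzeroVectors c)

/-- The generating function of row chains by weight. -/
noncomputable def rowChainGF (c : ℕ) : ℕ∞⟦X⟧ := genFun weight {L | IsRowChain c L}

/-- The generating function of zigzags by weight. -/
noncomputable def zigzagGF (c : ℕ) : ℕ∞⟦X⟧ := genFun weight {L | IsZigzag c L}

theorem weight_nil : weight [] = 0 := rfl

theorem weight_map_map (f : ℕ → ℕ) (L : List (Multiset ℕ)) :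
    weight (L.map (Multiset.map f)) = weight L := by
  simp only [weight, List.map_map, Function.comp_def, Multiset.card_map]

theorem vectors_zero : vectors 0 = {0} := by
  ext v
  simp [vectors, Multiset.eq_zero_iff_forall_notMem]

theorem mem_nonzeroVectors_iff_notMem {c : ℕ} {v : Multiset ℕ} :
    v ∈ nonzeroVectors c ↔ v ∈ nonzeroVectors (c + 1) ∧ c ∉ v := by
  constructor
  · rintro ⟨hlt, hne⟩
    exact ⟨⟨fun i hi => (hlt i hi).trans c.lt_succ_self, hne⟩, fun hc => (hlt c hc).false⟩
  · rintro ⟨⟨hlt, hne⟩, hc⟩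
    exact ⟨fun i hi => (Nat.lt_succ_iff.1 (hlt i hi)).lt_of_ne fun h => hc (h ▸ hi), hne⟩

theorem genFun_vectors (c : ℕ) : genFun Multiset.card (vectors c) = 1 + vectorGF c := by
  have hunion : vectors c = {0} ∪ nonzeroVectors c := by
    ext v
    by_cases hv : v = 0 <;> simp [vectors, nonzeroVectors, hv]
  have hdisj : Disjoint {0} (nonzeroVectors c) := Set.disjoint_singleton_left.2 fun h => h.2 rfl
  rw [hunion, genFun_union _ hdisj, genFun_singleton Multiset.card_zero, vectorGF]

theorem constantCoeff_vectorGF (c : ℕ) : constantCoeff (vectorGF c) = 0 := by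
  rw [← coeff_zero_eq_constantCoeff_apply, vectorGF, coeff_genFun, Set.encard_eq_zero,
    Set.sep_eq_empty_iff_mem_false]
  exact fun v hv h => hv.2 (Multiset.card_eq_zero.1 h)

theorem rowChainGF_eq (c : ℕ) :
    rowChainGF c = 1 + vectorGF (c + 1) * rowChainGF (c + 1) := by
  let cons (p : Multiset ℕ × List (Multiset ℕ)) := p.1 :: p.2
  have hcons : Function.Injective cons := fun p q h => by simpa [cons, Prod.ext_iff] using h
  have hunion : {L | IsRowChain c L} =
      {[]} ∪ cons '' (nonzeroVectors (c + 1) ×ˢ {L | IsRowChain (c + 1) L}) := by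
    ext (_ | ⟨v, L⟩) <;> simp [IsRowChain, cons]
  have hdisj : Disjoint {[]} (cons '' (nonzeroVectors (c + 1) ×ˢ {L | IsRowChain (c + 1) L})) := by
    simp [cons]
  rw [rowChainGF, hunion, genFun_union _ hdisj, genFun_singleton weight_nil,
    genFun_image hcons.injOn, vectorGF, rowChainGF, ← genFun_prod]
  rfl

/-- The increasing enumeration of the natural numbers other than `i`. -/
def skip (i j : ℕ) : ℕ := if j < i then j else j + 1

theorem skip_injective (i : ℕ) : Function.Injective (skip i) := fun j k h => by
  grind [skip]

theorem exists_skip_eq {i j : ℕ} (h : j ≠ i) : ∃ k, skip i k = j :=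
  ⟨if j < i then j else j - 1, by grind [skip]⟩

theorem map_skip_mem_vectors {i c : ℕ} (h : i ≤ c) {v : Multiset ℕ} :
    v.map (skip i) ∈ vectors (c + 1) ↔ v ∈ vectors c := by
  have hlt (j : ℕ) : skip i j < c + 1 ↔ j < c := by grind [skip]
  simp only [vectors, Set.mem_ofPred_eq, Multiset.forall_mem_map_iff, hlt]

theorem map_skip_mem_nonzeroVectors {i c : ℕ} (h : i ≤ c) {v : Multiset ℕ} :
    v.map (skip i) ∈ nonzeroVectors (c + 1) ↔ v ∈ nonzeroVectors c := by
  simp only [nonzeroVectors, Set.mem_sep_iff, map_skip_mem_vectors h, ne_eq, Multiset.map_eq_zero]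

theorem isZigzag_map_skip {i c : ℕ} (h : i ≤ c) (L : List (Multiset ℕ)) :
    IsZigzag (c + 1) (L.map (Multiset.map (skip i))) ↔ IsZigzag c L := by
  induction c, L using IsZigzag.induct with
  | case1 => simp [IsZigzag]
  | case2 c v => exact map_skip_mem_nonzeroVectors (by omega)
  | case3 c v w L ih =>
    have hmem (u : Multiset ℕ) : c + 1 ∈ u.map (skip i) ↔ c ∈ u := by
      have hc : skip i c = c + 1 := if_neg h.not_gt
      rw [← hc, Multiset.mem_map_of_injective (skip_injective i)]
    simp only [List.map_cons, IsZigzag, Linked, map_skip_mem_nonzeroVectors (h.trans c.le_succ),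
      map_skip_mem_vectors (h.trans c.le_succ), ih (h.trans c.le_succ), hmem, ne_eq,
      Multiset.map_eq_zero, List.mem_map, exists_exists_and_eq_and]

theorem exists_map_skip_eq {i : ℕ} {L : List (Multiset ℕ)} (h : ∀ u ∈ L, i ∉ u) :
    ∃ L' : List (Multiset ℕ), L'.map (Multiset.map (skip i)) = L := by
  have : CanLift ℕ ℕ (skip i) (· ≠ i) := ⟨fun _ => exists_skip_eq⟩
  have hne : ∀ u ∈ L, ∀ j ∈ u, j ≠ i := fun u hu j hj hji => h u hu (hji ▸ hj)
  exact CanLift.prf L hne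

/-- The triples `(v, w, L)` for which `v :: w :: L` satisfies all conditions in `IsZigzag c` but
possibly `Linked`. -/
def preZigzags (c : ℕ) : Set (Multiset ℕ × Multiset ℕ × List (Multiset ℕ)) :=
  nonzeroVectors (c + 1) ×ˢ vectors (c + 1) ×ˢ {L | IsZigzag (c + 1) L}

/-- The triples `(v, w, L)` for which `v :: w :: L` is a zigzag. -/
def linkedTriples (c : ℕ) : Set (Multiset ℕ × Multiset ℕ × List (Multiset ℕ)) :=
  {p ∈ preZigzags c | Linked c p.1 p.2.1 p.2.2}

/-- The weight of the list `v :: w :: L` encoded as the triple `(v, w, L)`. -/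
def tripleWeight (p : Multiset ℕ × Multiset ℕ × List (Multiset ℕ)) : ℕ :=
  p.1.card + (p.2.1.card + weight p.2.2)

theorem genFun_preZigzags (c : ℕ) :
    genFun tripleWeight (preZigzags c) =
      vectorGF (c + 1) * ((1 + vectorGF (c + 1)) * zigzagGF (c + 1)) := by
  rw [← genFun_vectors, vectorGF, zigzagGF, ← genFun_prod, ← genFun_prod]
  rfl

theorem zigzagGF_eq_add (c : ℕ) :
    zigzagGF c = 1 + vectorGF (c + 1) + genFun tripleWeight (linkedTriples c) := by
  let cons₂ (p : Multiset ℕ × Multiset ℕ × List (Multiset ℕ)) := p.1 :: p.2.1 :: p.2.2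
  have hsingle : Function.Injective fun v : Multiset ℕ => [v] := fun v w h => by simpa using h
  have hcons₂ : Function.Injective cons₂ := fun p q h => by
    simpa [cons₂, Prod.ext_iff] using h
  have hunion : {L | IsZigzag c L} = {[]} ∪ (fun v => [v]) '' nonzeroVectors (c + 1) ∪
      cons₂ '' linkedTriples c := by
    ext (_ | ⟨v, _ | ⟨w, L⟩⟩) <;>
      simp [IsZigzag, cons₂, linkedTriples, preZigzags, Linked, and_assoc]
  have hdisj₁ : Disjoint {[]} ((fun v : Multiset ℕ => [v]) '' nonzeroVectors (c + 1)) := by simp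
  have hdisj₂ : Disjoint ({[]} ∪ (fun v => [v]) '' nonzeroVectors (c + 1))
      (cons₂ '' linkedTriples c) := by
    rw [Set.disjoint_right]
    rintro _ ⟨p, -, rfl⟩
    simp [cons₂]
  rw [zigzagGF, hunion, genFun_union _ hdisj₂, genFun_union _ hdisj₁, genFun_singleton weight_nil,
    genFun_image hsingle.injOn, genFun_image hcons₂.injOn, vectorGF]
  rfl

theorem genFun_preZigzags_diff (c : ℕ) :
    genFun tripleWeight (preZigzags c \ linkedTriples c) = vectorGF c * zigzagGF c := by
  let insertRow (p : Multiset ℕ × List (Multiset ℕ)) :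
      Multiset ℕ × Multiset ℕ × List (Multiset ℕ) :=
    (p.1, 0, p.2.map (Multiset.map (skip c)))
  have hinj : Function.Injective insertRow := fun p q h => by
    simp only [insertRow, Prod.mk.injEq, true_and] at h
    exact Prod.ext h.1 (List.map_injective_iff.2 (Multiset.map_injective (skip_injective c)) h.2)
  have himage : preZigzags c \ linkedTriples c =
      insertRow '' (nonzeroVectors c ×ˢ {L | IsZigzag c L}) := by
    ext ⟨v, w, L⟩
    constructor
    · rintro ⟨⟨hv, hw, hL⟩, hp⟩
      have hlink : ¬Linked c v w L := fun h => hp ⟨⟨hv, hw, hL⟩, h⟩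
      simp only [Linked, not_or, not_not, not_exists, not_and] at hlink
      obtain ⟨rfl, hcv, hcL⟩ := hlink
      obtain ⟨L', rfl⟩ := exists_map_skip_eq hcL
      have hL' : IsZigzag c L' := (isZigzag_map_skip le_rfl L').1 hL
      exact ⟨(v, L'), ⟨mem_nonzeroVectors_iff_notMem.2 ⟨hv, hcv⟩, hL'⟩, rfl⟩
    · rintro ⟨⟨v, L⟩, ⟨hv, hL⟩, ⟨⟩⟩
      obtain ⟨hv, hcv⟩ := mem_nonzeroVectors_iff_notMem.1 hv
      have hc (j : ℕ) : skip c j ≠ c := by grind [skip]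
      have hlink : ¬Linked c v 0 (L.map (Multiset.map (skip c))) := by simp [Linked, hcv, hc]
      exact ⟨⟨hv, by simp [vectors], (isZigzag_map_skip le_rfl L).2 hL⟩, fun h => hlink h.2⟩
  rw [himage, genFun_image hinj.injOn, vectorGF, zigzagGF, ← genFun_prod]
  congr 1
  ext p
  simp [insertRow, tripleWeight, weight_map_map]

theorem one_add_vectorGF_mul_zigzagGF (c : ℕ) :
    (1 + vectorGF c) * zigzagGF c =
      1 + vectorGF (c + 1) + vectorGF (c + 1) * ((1 + vectorGF (c + 1)) * zigzagGF (c + 1)) := by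
  have hsplit : preZigzags c = linkedTriples c ∪ (preZigzags c \ linkedTriples c) :=
    (Set.union_sdiff_cancel (Set.sep_subset _ _)).symm
  rw [← genFun_preZigzags, hsplit, genFun_union _ Set.disjoint_sdiff_right, genFun_preZigzags_diff,
    ← add_assoc, ← zigzagGF_eq_add, add_mul, one_mul]

theorem one_add_one_add_vectorGF_mul_zigzagGF (c : ℕ) :
    1 + (1 + vectorGF c) * zigzagGF c = 2 * rowChainGF c := by
  refine eq_of_forall_eq_add_mul (a := 2) (v := fun c => vectorGF (c + 1))
    (f := fun c => 1 + (1 + vectorGF c) * zigzagGF c) (g := fun c => 2 * rowChainGF c)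
    (fun c => constantCoeff_vectorGF (c + 1)) (fun c => ?_) (fun c => ?_) c
  · rw [one_add_vectorGF_mul_zigzagGF]
    ring
  · rw [rowChainGF_eq]
    ring

theorem one_add_zigzagGF_zero : 1 + zigzagGF 0 = 2 * rowChainGF 0 := by
  have hvector : 1 + vectorGF 0 = 1 := by
    rw [← genFun_vectors, vectors_zero, genFun_singleton Multiset.card_zero]
  rw [← one_add_one_add_vectorGF_mul_zigzagGF, hvector, one_mul]

theorem encard_zigzags_eq_two_mul {n : ℕ} (hn : n ≠ 0) :
    {L | IsZigzag 0 L ∧ weight L = n}.encard =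
      2 * {L | IsRowChain 0 L ∧ weight L = n}.encard := by
  have h := congrArg (coeff n) one_add_zigzagGF_zero
  rw [map_add, coeff_one, if_neg hn, zero_add, two_mul, map_add, ← two_mul] at h
  rwa [zigzagGF, rowChainGF, coeff_genFun, coeff_genFun] at h

end Counting

section Rows

variable {m : ℕ}

/-- The multiset encoding of the vector `f`: the number `i` has multiplicity `f i`. -/
def toVector (f : Fin m → ℕ) : Multiset ℕ := ∑ i, f i • {(i : ℕ)}

theorem count_toVector (f : Fin m → ℕ) (i : Fin m) : (toVector f).count (i : ℕ) = f i := by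
  simp [toVector, Multiset.count_sum', Multiset.count_singleton, Fin.val_inj]

theorem card_toVector (f : Fin m → ℕ) : (toVector f).card = ∑ i, f i := by
  simp [toVector]

theorem mem_toVector {f : Fin m → ℕ} {k : ℕ} : k ∈ toVector f ↔ ∃ i, f i ≠ 0 ∧ (i : ℕ) = k := by
  simp [toVector, Multiset.mem_sum, Multiset.mem_nsmul, eq_comm]

theorem toVector_ne_zero {f : Fin m → ℕ} : toVector f ≠ 0 ↔ ∃ i, f i ≠ 0 := by
  rw [← Multiset.card_pos, card_toVector, Finset.sum_pos_iff]
  simp [Nat.pos_iff_ne_zero]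

theorem toVector_mem_vectors {f : Fin m → ℕ} {c : ℕ} :
    toVector f ∈ vectors c ↔ ∀ i, f i ≠ 0 → (i : ℕ) < c := by
  simp only [vectors, Set.mem_ofPred_eq, mem_toVector]
  grind

theorem exists_toVector_eq {v : Multiset ℕ} (hv : v ∈ vectors m) :
    ∃ f : Fin m → ℕ, toVector f = v := by
  refine ⟨fun i => v.count (i : ℕ), Multiset.ext.2 fun k => ?_⟩
  by_cases hk : k < m
  · exact count_toVector _ ⟨k, hk⟩
  · rw [Multiset.count_eq_zero.2 fun h => hk (hv k h), Multiset.count_eq_zero]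
    intro h
    obtain ⟨i, -, rfl⟩ := mem_toVector.1 h
    exact hk i.2

/-- The list of rows of a matrix, each encoded as a multiset by `toVector`. -/
def rows (P : Mat m) : List (Multiset ℕ) := List.ofFn fun l => toVector (P l)

theorem weight_rows (P : Mat m) : weight (rows P) = msize P := by
  simp [weight, rows, List.map_ofFn, List.sum_ofFn, card_toVector, msize]

theorem rows_injective : Function.Injective fun A : SMat => rows A.2 := by
  rintro ⟨m, P⟩ ⟨m', Q⟩ h
  obtain rfl : m = m' := by simpa [rows] using congrArg List.length h
  congr
  ext l i
  rw [← count_toVector (P l), ← count_toVector (Q l), congrFun (List.ofFn_injective h) l]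

theorem exists_rows_eq {L : List (Multiset ℕ)} (h : ∀ v ∈ L, v ∈ vectors L.length) :
    ∃ P : Mat L.length, rows P = L := by
  choose P hP using fun l : Fin L.length => exists_toVector_eq (h L[l] (L.getElem_mem l.2))
  refine ⟨P, ?_⟩
  simp only [rows, hP]
  exact List.ofFn_getElem

theorem encard_eq_of_rows_mem_iff (e : ∀ m, Mat m ≃ Mat m) {S : Set SMat}
    {T : Set (List (Multiset ℕ))} (hT : ∀ L ∈ T, ∀ v ∈ L, v ∈ vectors L.length)
    (h : ∀ m (M : Mat m), ⟨m, M⟩ ∈ S ↔ rows (e m M) ∈ T) : S.encard = T.encard := by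
  have hinj := rows_injective.comp (Equiv.sigmaCongrRight e).injective
  obtain rfl : S = ((fun A => rows A.2) ∘ Equiv.sigmaCongrRight e) ⁻¹' T :=
    Set.ext fun A => h A.1 A.2
  refine Set.encard_preimage_of_injective_subset_range hinj fun L hL => ?_
  obtain ⟨P, hP⟩ := exists_rows_eq (hT L hL)
  exact ⟨⟨_, (e _).symm P⟩, (congrArg rows ((e _).apply_symm_apply P)).trans hP⟩

end Rows

section RowFishburn

theorem isRowChain_iff {c : ℕ} {L : List (Multiset ℕ)} :
    IsRowChain c L ↔ ∀ (l : ℕ) (h : l < L.length), L[l] ∈ nonzeroVectors (c + l + 1) := by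
  induction L generalizing c with
  | nil => simp [IsRowChain]
  | cons v L ih =>
    have hadd (l : ℕ) : c + 1 + l + 1 = c + (l + 1) + 1 := by omega
    simp only [IsRowChain, ih, List.length_cons, Nat.forall_lt_succ_left', List.getElem_cons_zero,
      List.getElem_cons_succ, hadd, add_zero]

theorem isRowChain_rows_iff {m : ℕ} {P : Mat m} :
    IsRowChain 0 (rows P) ↔ (∀ l i, P l i ≠ 0 → i ≤ l) ∧ ∀ l, rowNonzero P l := by
  simp only [isRowChain_iff, rows, List.length_ofFn, List.getElem_ofFn, nonzeroVectors,
    Set.mem_sep_iff, toVector_mem_vectors, toVector_ne_zero, rowNonzero, zero_add,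
    Nat.lt_succ_iff, ← forall_and]
  rw [Fin.forall_iff]
  rfl

/-- Rotation of matrices by a half turn. -/
def rotate (m : ℕ) : Mat m ≃ Mat m := Matrix.reindex Fin.revPerm Fin.revPerm

theorem rotate_apply {m : ℕ} (M : Mat m) (i j : Fin m) : rotate m M i j = M i.rev j.rev := rfl

theorem msize_reindex {m : ℕ} (e f : Equiv.Perm (Fin m)) (M : Mat m) :
    msize (Matrix.reindex e f M) = msize M := by
  simp only [msize, Matrix.reindex_apply, Matrix.submatrix_apply]
  rw [e.symm.sum_comp fun i => ∑ j, M i (f.symm j)]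
  exact Finset.sum_congr rfl fun i _ => f.symm.sum_comp (M i)

theorem mem_RMset_iff {n m : ℕ} {M : Mat m} :
    ⟨m, M⟩ ∈ RMset n ↔ rows (rotate m M) ∈ {L | IsRowChain 0 L ∧ weight L = n} := by
  have hUT : UT M ↔ ∀ l i, rotate m M l i ≠ 0 → i ≤ l := by
    constructor
    · exact fun h l i hne => not_lt.1 fun hli => hne (h _ _ (Fin.rev_lt_rev.2 hli))
    · exact fun h i j hji => by_contra fun hne =>
        hji.not_ge (Fin.rev_le_rev.1 (h i.rev j.rev (by rwa [rotate_apply, i.rev_rev, j.rev_rev])))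
  have hrow : (∀ i, rowNonzero M i) ↔ ∀ l, rowNonzero (rotate m M) l :=
    Fin.rev_surjective.forall.trans (forall_congr' fun _ => Fin.rev_surjective.exists)
  simp only [RMset, Set.mem_ofPred_eq, weight_rows, isRowChain_rows_iff, hUT, hrow, and_assoc,
    rotate, msize_reindex]

theorem encard_RMset_eq_encard_rowChains (n : ℕ) :
    (RMset n).encard = {L | IsRowChain 0 L ∧ weight L = n}.encard := by
  refine encard_eq_of_rows_mem_iff rotate (fun L hL v hv => ?_) fun m M => mem_RMset_iff
  obtain ⟨l, hl, rfl⟩ := List.mem_iff_getElem.1 hv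
  exact fun i hi => ((isRowChain_iff.1 hL.1 l hl).1 i hi).trans_le (by omega)

end RowFishburn

section SelfDualFishburn

theorem isZigzag_iff {c : ℕ} {L : List (Multiset ℕ)} :
    IsZigzag c L ↔ ∀ (l : ℕ) (h : l < L.length), L[l] ∈ vectors (c + l / 2 + 1) ∧
      (L[l] ≠ 0 ∨ l % 2 = 1 ∧ ∃ u ∈ L, c + l / 2 ∈ u) := by
  induction c, L using IsZigzag.induct with
  | case1 => simp [IsZigzag]
  | case2 c v => simp [IsZigzag, nonzeroVectors]
  | case3 c v w L ih =>
    have hhalf (l : ℕ) : c + (l + 2) / 2 = c + 1 + l / 2 := by omega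
    have hmod (l : ℕ) : (l + 2) % 2 = l % 2 := Nat.add_mod_right l 2
    have hlink : Linked c v w L ↔ w ≠ 0 ∨ ∃ u ∈ v :: w :: L, c ∈ u := by
      have hne : c ∈ w → w ≠ 0 := by rintro h rfl; exact Multiset.notMem_zero c h
      simp only [Linked, List.mem_cons, exists_eq_or_imp]
      tauto
    have htail (hv : v ∈ vectors (c + 1)) (hw : w ∈ vectors (c + 1)) (l : ℕ) :
        (∃ u ∈ v :: w :: L, c + 1 + l / 2 ∈ u) ↔ ∃ u ∈ L, c + 1 + l / 2 ∈ u := by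
      have hv' : c + 1 + l / 2 ∉ v := fun h => by have := hv _ h; omega
      have hw' : c + 1 + l / 2 ∉ w := fun h => by have := hw _ h; omega
      simp [hv', hw']
    simp only [IsZigzag, ih, hlink, List.length_cons, Nat.forall_lt_succ_left',
      List.getElem_cons_zero, List.getElem_cons_succ, hhalf, hmod, nonzeroVectors,
      Set.mem_sep_iff, Nat.zero_div, add_zero, zero_add]
    by_cases hv : v ∈ vectors (c + 1)
    · by_cases hw : w ∈ vectors (c + 1)
      · simp only [htail hv hw, hv, hw]
        simp [and_comm]
      · simp [hw]
    · simp [hv]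

variable {m : ℕ}

/-- The order in which a zigzag lists the columns: `0, m - 1, 1, m - 2, …`. -/
def zigzagPerm (m : ℕ) : Equiv.Perm (Fin m) where
  toFun l := ⟨if (l : ℕ) % 2 = 0 then l / 2 else m - 1 - l / 2, by grind⟩
  invFun j := ⟨if 2 * (j : ℕ) < m then 2 * j else 2 * (m - 1 - j) + 1, by grind⟩
  left_inv l := by grind
  right_inv j := by grind

/-- The matrix whose rows are the columns of the given one in zigzag order. -/
def zigzagColumns (m : ℕ) : Mat m ≃ Mat m :=
  (Matrix.reindex (Equiv.refl _) (zigzagPerm m).symm).trans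
    (Matrix.transposeAddEquiv _ _ _).toEquiv

theorem zigzagColumns_apply (N : Mat m) (l i : Fin m) :
    zigzagColumns m N l i = N i (zigzagPerm m l) := rfl

theorem msize_zigzagColumns (N : Mat m) : msize (zigzagColumns m N) = msize N := by
  simp only [msize, zigzagColumns_apply]
  rw [Finset.sum_comm]
  exact Finset.sum_congr rfl fun i _ => Equiv.sum_comp (zigzagPerm m) (N i)

/-- Matrices arising as the reduced matrix of a self-dual Fishburn matrix. -/
def IsReducedFishburn (N : Mat m) : Prop :=
  SuperTri N ∧ ∀ j : Fin m, colNonzero N j ∨ rowNonzero N j.rev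

/-- The self-dual matrix with the same diagonal cells and NW-cells as `N`. -/
def selfDualExtension (N : Mat m) : Mat m := fun i j =>
  if (i : ℕ) + j + 1 ≤ m then N i j else N j.rev i.rev

theorem superTri_iff {N : Mat m} :
    SuperTri N ↔ ∀ j i, N i j ≠ 0 → i ≤ j ∧ (i : ℕ) + j + 1 ≤ m := by
  grind [SuperTri, UT]

theorem selfDual_selfDualExtension (N : Mat m) : SelfDual (selfDualExtension N) := by
  ext i j
  have hdiag (h : (i : ℕ) + j + 1 = m) : j.rev = i ∧ i.rev = j := by grind
  grind [dual, selfDualExtension, Fin.rev_rev]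

theorem reduced_selfDualExtension {N : Mat m} (hN : SuperTri N) :
    reduced (selfDualExtension N) = N := by
  ext i j
  grind [reduced, SuperTri, selfDualExtension]

theorem selfDualExtension_reduced {M : Mat m} (hM : SelfDual M) :
    selfDualExtension (reduced M) = M := by
  ext i j
  have hdual : M i j = M j.rev i.rev := congrFun₂ hM i j
  grind [reduced, selfDualExtension]

theorem ne_zero_iff_of_selfDual {M : Mat m} (hM : SelfDual M) (i j : Fin m) :
    M i j ≠ 0 ↔ reduced M i j ≠ 0 ∨ reduced M j.rev i.rev ≠ 0 := by
  have hdual : M i j = M j.rev i.rev := congrFun₂ hM i j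
  grind [reduced]

theorem isFishburn_iff {M : Mat m} (hM : SelfDual M) :
    IsFishburn M ↔ IsReducedFishburn (reduced M) := by
  have hsuper : UT M ↔ SuperTri (reduced M) := by
    have := ne_zero_iff_of_selfDual hM
    grind [UT, SuperTri, reduced]
  have hcol (j : Fin m) :
      colNonzero M j ↔ colNonzero (reduced M) j ∨ rowNonzero (reduced M) j.rev := by
    simp only [colNonzero, rowNonzero, ne_zero_iff_of_selfDual hM, exists_or]
    rw [Fin.rev_surjective.exists (p := fun k => reduced M j.rev k ≠ 0)]
  have hrow (i : Fin m) (h : colNonzero M i.rev) : rowNonzero M i := by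
    obtain ⟨k, hk⟩ := h
    rw [congrFun₂ hM k i.rev, dual, i.rev_rev] at hk
    exact ⟨k.rev, hk⟩
  simp only [IsFishburn, IsReducedFishburn, hsuper, ← hcol]
  exact and_congr_right fun _ => and_iff_right_of_imp fun h i => hrow i (h i.rev)

theorem encard_Mset_eq_encard_reduced (n : ℕ) :
    (Mset n).encard = {A : SMat | IsReducedFishburn A.2 ∧ msize A.2 = n}.encard := by
  let reduce : SMat → SMat := Sigma.map id fun _ => reduced
  have hinj : Set.InjOn reduce (Mset n) := by
    refine Set.LeftInvOn.injOn (f₁' := Sigma.map id fun _ => selfDualExtension) fun A hA => ?_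
    exact congrArg (Sigma.mk A.1) (selfDualExtension_reduced hA.2.1)
  have himage : reduce '' Mset n = {A : SMat | IsReducedFishburn A.2 ∧ msize A.2 = n} := by
    ext ⟨m, N⟩
    constructor
    · rintro ⟨⟨m, M⟩, ⟨hF, hdual, hsize⟩, ⟨⟩⟩
      exact ⟨(isFishburn_iff hdual).1 hF, hsize⟩
    · rintro ⟨hN, hsize⟩
      have hdual := selfDual_selfDualExtension N
      have hred : reduced (selfDualExtension N) = N := reduced_selfDualExtension hN.1
      exact ⟨⟨m, selfDualExtension N⟩, ⟨(isFishburn_iff hdual).2 (hred.symm ▸ hN), hdual,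
        (congrArg msize hred).trans hsize⟩, congrArg (Sigma.mk m) hred⟩
  rw [← himage, hinj.encard_image]

theorem isZigzag_rows_iff {P : Mat m} :
    IsZigzag 0 (rows P) ↔ ∀ l : Fin m, (∀ i, P l i ≠ 0 → (i : ℕ) ≤ l / 2) ∧
      (rowNonzero P l ∨ (l : ℕ) % 2 = 1 ∧ ∃ k i, P k i ≠ 0 ∧ (i : ℕ) = l / 2) := by
  simp only [isZigzag_iff, rows, List.length_ofFn, List.getElem_ofFn, toVector_mem_vectors,
    toVector_ne_zero, List.mem_ofFn, exists_exists_eq_and, mem_toVector, rowNonzero, zero_add,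
    Nat.lt_succ_iff]
  rw [Fin.forall_iff]

theorem colNonzero_of_rowNonzero_rev {N : Mat m} (hN : SuperTri N) {j : Fin m}
    (hj : 2 * (j : ℕ) < m) (h : rowNonzero N j.rev) : colNonzero N j := by
  obtain ⟨k, hk⟩ := h
  have hle := superTri_iff.1 hN k j.rev hk
  obtain rfl : k = j := by grind
  exact ⟨_, hk⟩

theorem isReducedFishburn_iff {N : Mat m} :
    IsReducedFishburn N ↔ IsZigzag 0 (rows (zigzagColumns m N)) := by
  have hcell (l i : Fin m) :
      i ≤ zigzagPerm m l ∧ (i : ℕ) + zigzagPerm m l + 1 ≤ m ↔ (i : ℕ) ≤ l / 2 := by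
    grind [zigzagPerm]
  have hsuper : SuperTri N ↔ ∀ l i, N i (zigzagPerm m l) ≠ 0 → (i : ℕ) ≤ l / 2 := by
    simp only [superTri_iff, ← hcell]
    exact (zigzagPerm m).surjective.forall
  rw [isZigzag_rows_iff, forall_and, IsReducedFishburn, (zigzagPerm m).surjective.forall, hsuper]
  simp only [zigzagColumns_apply, rowNonzero]
  refine and_congr_right fun hN => forall_congr' fun l => ?_
  rcases Nat.mod_two_eq_zero_or_one l with hl | hl
  · have heven : 2 * (zigzagPerm m l : ℕ) < m := by grind [zigzagPerm]
    simp only [hl, zero_ne_one, false_and, or_false]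
    exact or_iff_left_of_imp (colNonzero_of_rowNonzero_rev (hsuper.2 hN) heven)
  · have hodd (i : Fin m) : (zigzagPerm m l).rev = i ↔ (i : ℕ) = l / 2 := by grind [zigzagPerm]
    simp only [hl, true_and, ← hodd, exists_eq_right']
    exact or_congr_right (zigzagPerm m).surjective.exists

theorem encard_Mset_eq_encard_zigzags (n : ℕ) :
    (Mset n).encard = {L | IsZigzag 0 L ∧ weight L = n}.encard := by
  rw [encard_Mset_eq_encard_reduced]
  refine encard_eq_of_rows_mem_iff zigzagColumns (fun L hL v hv => ?_) fun m N => ?_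
  · obtain ⟨l, hl, rfl⟩ := List.mem_iff_getElem.1 hv
    exact fun i hi => ((isZigzag_iff.1 hL.1 l hl).1 i hi).trans_le (by omega)
  · simp only [Set.mem_ofPred_eq, isReducedFishburn_iff, weight_rows, msize_zigzagColumns]

end SelfDualFishburn

end Fishburn

/-- `|M(n)| = 2 |RM(n)|` for all `n ≥ 1`. -/
theorem stmt8 (n : ℕ) (hn : 1 ≤ n) :
    (Mset n).ncard = 2 * (RMset n).ncard := by
  have h : (Mset n).encard = 2 * (RMset n).encard := by
    rw [Fishburn.encard_Mset_eq_encard_zigzags, Fishburn.encard_RMset_eq_encard_rowChains,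
      Fishburn.encard_zigzags_eq_two_mul (Nat.one_le_iff_ne_zero.1 hn)]
  rw [Set.ncard, h, ENat.toNat_mul]
  rfl
end
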